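/- arXiv:2510.21334 — 2 statements merged into one kernel-verified Lean document; each statement's English description precedes it below -/
import Mathlib

section
/- Let g ≥ 2 and let Γ_g be the fundamental group of the closed orientable surface of genus g, presented as ⟨a₁, b₁, …, a_g, b_g | [a₁,b₁][a₂,b₂]⋯[a_g,b_g]⟩. Then Γ_g admits a faithful, properly discontinuous action on ℝ⁶ by affine transformations. (Danciger–Guéritaud–Kassel: every closed hyperbolic surface group admits a proper affine action on ℝ⁶ ≅ 𝔰𝔩(2,ℂ).) -/
open scoped commutatorElement

/-- The surface relator `[a₁,b₁][a₂,b₂]⋯[a_g,b_g]` in the free group on generators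
`a₁, b₁, …, a_g, b_g` (the `a`'s indexed by `Sum.inl`, the `b`'s by `Sum.inr`). -/
def surfaceRelator (g : ℕ) : FreeGroup (Fin g ⊕ Fin g) :=
  (List.ofFn fun i : Fin g =>
    ⁅(FreeGroup.of (Sum.inl i) : FreeGroup (Fin g ⊕ Fin g)), FreeGroup.of (Sum.inr i)⁆).prod

/-- The fundamental group of the closed orientable surface of genus `g`, presented as
`⟨a₁, b₁, …, a_g, b_g | [a₁,b₁][a₂,b₂]⋯[a_g,b_g]⟩`. -/
abbrev SurfaceGroup (g : ℕ) : Type :=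
  PresentedGroup ({surfaceRelator g} : Set (FreeGroup (Fin g ⊕ Fin g)))

/-!
The group generated by the reflections in the sides of a right-angled `(2g+2)`-gon is a right-angled
Coxeter group containing `Γ_g`. Its reflection representations belong to a family `ρ_t`, polynomial
in `t`, of isometric representations for diagonal forms `J_t` on `ℝ⁴`; the group acts affinely on
the six-dimensional space of skew-symmetric forms, with linear part induced by `ρ_τ` and translation
part the derivative of the family at `τ`.

If the affine map of `γ` takes a bounded skew-symmetric form to a bounded one, then the entry
`p(t) = ⟨e₀, ρ_t(γ) e₀⟩`, which dominates its column, satisfies `p'(τ) ≤ Q p(τ)` for a constant `Q`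
depending only on the bound. But `p` has nonnegative coefficients: along a reduced word the
reflections move the timelike vector `e₀` by the values fired in a numbers game whose positions stay
nonnegative. If its logarithmic derivative at `τ` is bounded, then `p(τ)` is at most a constant
times `p(1)`, and for large `τ` this fails for all but finitely many `γ`: `p(1)` is at most
exponential in the word length with a fixed base, whereas `p(τ)` grows exponentially with a base
that tends to infinity with `τ`.
-/

/-! ### Right-angled Coxeter groups -/

/-- The Coxeter matrix of the right-angled Coxeter group of a graph: adjacent generators commute,
and distinct non-adjacent ones satisfy no relation (encoded by `0`, Mathlib's `∞`). -/
def rightAngledCoxeterMatrix {S : Type*} [DecidableEq S] (Γ : SimpleGraph S)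
    [DecidableRel Γ.Adj] : CoxeterMatrix S where
  M := Matrix.of fun i j => if i = j then 1 else if Γ.Adj i j then 2 else 0
  isSymm := by
    ext i j
    simp only [Matrix.transpose_apply, Matrix.of_apply, eq_comm (a := j), Γ.adj_comm j]
  diagonal i := by simp only [Matrix.of_apply, if_true]
  off_diagonal i j hij := by
    simp only [Matrix.of_apply, if_neg hij]
    split_ifs <;> decide

section RightAngled

variable {S : Type*} [DecidableEq S] {Γ : SimpleGraph S} [DecidableRel Γ.Adj]

lemma isLiftable_rightAngledCoxeterMatrix {G : Type*} [Monoid G] {f : S → G}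
    (hsq : ∀ i, f i * f i = 1) (hcomm : ∀ i j, Γ.Adj i j → Commute (f i) (f j)) :
    (rightAngledCoxeterMatrix Γ).IsLiftable f := by
  intro i j
  change (f i * f j) ^ (if i = j then 1 else if Γ.Adj i j then 2 else 0) = 1
  split_ifs with hij hadj
  · rw [hij, pow_one, hsq]
  · rw [(hcomm i j hadj).mul_pow, pow_two, pow_two, hsq, hsq, mul_one]
  · exact pow_zero _

lemma commute_simple_of_adj {W : Type*} [Group W]
    (cs : CoxeterSystem (rightAngledCoxeterMatrix Γ) W) {i j : S} (hij : Γ.Adj i j) :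
    Commute (cs.simple i) (cs.simple j) := by
  have hM : rightAngledCoxeterMatrix Γ i j = 2 := by
    change (if i = j then 1 else if Γ.Adj i j then 2 else 0) = 2
    rw [if_neg hij.ne, if_pos hij]
  have hpow := cs.simple_mul_simple_pow i j
  rw [hM, pow_two] at hpow
  rw [commute_iff_eq, eq_comm, ← cs.inv_simple i, ← cs.inv_simple j, ← mul_inv_rev, eq_comm,
    cs.inv_simple, cs.inv_simple]
  exact eq_inv_of_mul_eq_one_left hpow

end RightAngled

/-! ### Surface groups as subgroups of polygon reflection groups -/

/-- The product `[a₀,b₀]⋯[a_{n-1},b_{n-1}]`. -/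
def commutatorProd {G : Type*} [Group G] (a b : ℕ → G) : ℕ → G
  | 0 => 1
  | n + 1 => commutatorProd a b n * ⁅a n, b n⁆

/-- The product `b_{n-1}⋯b₀`. -/
def descendingProd {G : Type*} [Group G] (b : ℕ → G) : ℕ → G
  | 0 => 1
  | n + 1 => b n * descendingProd b n

section Products

variable {G : Type*} [Group G]

lemma prod_ofFn_commutator (a b : ℕ → G) (n : ℕ) :
    (List.ofFn fun i : Fin n => ⁅a i, b i⁆).prod = commutatorProd a b n := by
  induction n with
  | zero => rfl
  | succ n ih =>
    rw [List.ofFn_succ', List.concat_eq_append, List.prod_append, List.prod_singleton]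
    simp only [Fin.val_castSucc, Fin.val_last]
    rw [ih, commutatorProd]

lemma map_commutatorProd {H : Type*} [Group H] (f : G →* H) (a b : ℕ → G) (n : ℕ) :
    f (commutatorProd a b n) = commutatorProd (f ∘ a) (f ∘ b) n := by
  induction n with
  | zero => exact map_one f
  | succ n ih =>
    simp only [commutatorProd, map_mul, map_commutatorElement, ih, Function.comp_apply]

lemma commutatorProd_of_involutions {x y : ℕ → G} (hx : ∀ n, x n * x n = 1)
    (hy : ∀ n, y n * y n = 1) (hxy : ∀ n, Commute (x n) (y n))
    (hxy' : ∀ n, Commute (x n) (y (n + 1))) (n : ℕ) :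
    commutatorProd (fun n => x n * y 0 * x n * y (n + 1)) (fun n => x (n + 1) * x n) n =
      y 0 * (x n * y 0 * x n) := by
  induction n with
  | zero => rw [(hxy 0).eq, mul_assoc, hx, mul_one, hy]; rfl
  | succ n ih =>
    have hx_inv (n : ℕ) : (x n)⁻¹ = x n := inv_eq_of_mul_eq_one_left (hx n)
    have hy_inv (n : ℕ) : (y n)⁻¹ = y n := inv_eq_of_mul_eq_one_left (hy n)
    have hx_cancel (n : ℕ) (z : G) : x n * (x n * z) = z := by rw [← mul_assoc, hx, one_mul]
    have hy_cancel (n : ℕ) (z : G) : y n * (y n * z) = z := by rw [← mul_assoc, hy, one_mul]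
    rw [commutatorProd, ih]
    simp only [commutatorElement_def, mul_inv_rev, hx_inv, hy_inv, mul_assoc, hx_cancel, hy_cancel,
      (hxy' n).left_comm, (hxy (n + 1)).left_comm]

end Products

namespace SurfaceGroup

variable {g : ℕ} {G : Type*} [Group G]

/-- The generators `a₀, …, a_{g-1}` of the surface group, continued by `1` so that the partial
products of the relator are defined for all indices. -/
def a (g n : ℕ) : SurfaceGroup g :=
  if h : n < g then PresentedGroup.of (Sum.inl ⟨n, h⟩) else 1

/-- The generators `b₀, …, b_{g-1}` of the surface group, continued by `1`. -/
def b (g n : ℕ) : SurfaceGroup g :=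
  if h : n < g then PresentedGroup.of (Sum.inr ⟨n, h⟩) else 1

lemma a_eq_one {n : ℕ} (h : g ≤ n) : a g n = 1 := dif_neg h.not_gt

lemma b_eq_one {n : ℕ} (h : g ≤ n) : b g n = 1 := dif_neg h.not_gt

/-- The universal property of the surface group. -/
def lift (A B : ℕ → G) (h : commutatorProd A B g = 1) : SurfaceGroup g →* G :=
  PresentedGroup.toGroup (f := Sum.elim (fun i : Fin g => A i) fun i : Fin g => B i) <| by
    rintro _ rfl
    rw [surfaceRelator, map_list_prod, List.map_ofFn, ← h, ← prod_ofFn_commutator]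
    congr 2 with i
    simp only [Function.comp_apply, map_commutatorElement, FreeGroup.lift_apply_of,
      Sum.elim_inl, Sum.elim_inr]

lemma lift_a {A B : ℕ → G} (h : commutatorProd A B g = 1) {n : ℕ} (hn : n < g) :
    lift A B h (a g n) = A n := by
  rw [a, dif_pos hn]
  exact PresentedGroup.toGroup.of _

lemma lift_b {A B : ℕ → G} (h : commutatorProd A B g = 1) {n : ℕ} (hn : n < g) :
    lift A B h (b g n) = B n := by
  rw [b, dif_pos hn]
  exact PresentedGroup.toGroup.of _

lemma hom_ext {f f' : SurfaceGroup g →* G} (ha : ∀ n < g, f (a g n) = f' (a g n))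
    (hb : ∀ n < g, f (b g n) = f' (b g n)) : f = f' := by
  refine PresentedGroup.ext ?_
  rintro (⟨n, hn⟩ | ⟨n, hn⟩)
  · simpa only [a, dif_pos hn] using ha n hn
  · simpa only [b, dif_pos hn] using hb n hn

variable (g) in
/-- The partial products of the relator. -/
def partialRelator : ℕ → SurfaceGroup g := commutatorProd (a g) (b g)

variable (g) in
/-- The products `b_{n-1}⋯b₀` of generators. -/
def bProd : ℕ → SurfaceGroup g := descendingProd (b g)

local notation "Z" => partialRelator
local notation "R" => bProd

lemma partialRelator_zero : Z g 0 = 1 := rfl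

lemma partialRelator_succ (n : ℕ) : Z g (n + 1) = Z g n * ⁅a g n, b g n⁆ := rfl

lemma bProd_zero : R g 0 = 1 := rfl

lemma bProd_succ (n : ℕ) : R g (n + 1) = b g n * R g n := rfl

lemma partialRelator_eq_one {n : ℕ} (h : g ≤ n) : Z g n = 1 := by
  induction n, h using Nat.le_induction with
  | base =>
    have hrel : PresentedGroup.mk {surfaceRelator g} (surfaceRelator g) = 1 :=
      PresentedGroup.one_of_mem (Set.mem_singleton _)
    rw [← hrel, partialRelator, ← prod_ofFn_commutator]
    refine Eq.trans ?_ (map_list_prod (PresentedGroup.mk {surfaceRelator g}) _).symm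
    rw [List.map_ofFn]
    congr 2 with i
    simp only [Function.comp_apply, map_commutatorElement, a, b, dif_pos i.is_lt]
    rfl
  | succ n hn ih =>
    rw [partialRelator_succ, ih, a_eq_one hn, commutatorElement_one_left, one_mul]

lemma commutatorProd_conjX (n : ℕ) :
    commutatorProd (fun n => (R g n)⁻¹ * Z g n * a g n * R g n)
      (fun n => (R g (n + 1))⁻¹ * R g n) n = (R g n)⁻¹ * (Z g n)⁻¹ * R g n := by
  induction n with
  | zero => simp only [commutatorProd, partialRelator_zero, bProd_zero, inv_one, mul_one]
  | succ n ih =>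
    rw [commutatorProd, ih]
    simp only [partialRelator_succ, bProd_succ, commutatorElement_def]
    group

lemma commutatorProd_conjY (n : ℕ) :
    commutatorProd (fun n => Z g n * (a g n)⁻¹ * (Z g n)⁻¹)
      (fun n => Z g (n + 1) * b g n * (Z g n)⁻¹) n = (Z g n)⁻¹ := by
  induction n with
  | zero => simp only [commutatorProd, partialRelator_zero, inv_one]
  | succ n ih =>
    rw [commutatorProd, ih]
    simp only [partialRelator_succ, commutatorElement_def]
    group

/- The polygon group is `Γ_g ⋊ (ℤ/2)²`, the second factor being generated by the reflections `x₀`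
and `y₀` in two adjacent sides; `conjX` and `conjY` are the conjugations by `x₀` and `y₀`. -/

/-- The involutive automorphism of the surface group given by conjugation by `x₀`. -/
def conjX (g : ℕ) : SurfaceGroup g →* SurfaceGroup g :=
  lift (fun n => (R g n)⁻¹ * Z g n * a g n * R g n) (fun n => (R g (n + 1))⁻¹ * R g n) <| by
    rw [commutatorProd_conjX, partialRelator_eq_one le_rfl, inv_one, mul_one, inv_mul_cancel]

/-- The involutive automorphism of the surface group given by conjugation by `y₀`. -/
def conjY (g : ℕ) : SurfaceGroup g →* SurfaceGroup g :=
  lift (fun n => Z g n * (a g n)⁻¹ * (Z g n)⁻¹) (fun n => Z g (n + 1) * b g n * (Z g n)⁻¹) <| by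
    rw [commutatorProd_conjY, partialRelator_eq_one le_rfl, inv_one]

lemma conjX_a (n : ℕ) : conjX g (a g n) = (R g n)⁻¹ * Z g n * a g n * R g n := by
  rcases lt_or_ge n g with hn | hn
  · exact lift_a _ hn
  · simp only [a_eq_one hn, partialRelator_eq_one hn, map_one, mul_one, inv_mul_cancel]

lemma conjX_b (n : ℕ) : conjX g (b g n) = (R g (n + 1))⁻¹ * R g n := by
  rcases lt_or_ge n g with hn | hn
  · exact lift_b _ hn
  · simp only [bProd_succ, b_eq_one hn, map_one, one_mul, inv_mul_cancel]

lemma conjY_a (n : ℕ) : conjY g (a g n) = Z g n * (a g n)⁻¹ * (Z g n)⁻¹ := by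
  rcases lt_or_ge n g with hn | hn
  · exact lift_a _ hn
  · simp only [a_eq_one hn, map_one, inv_one, mul_one, mul_inv_cancel]

lemma conjY_b (n : ℕ) : conjY g (b g n) = Z g (n + 1) * b g n * (Z g n)⁻¹ := by
  rcases lt_or_ge n g with hn | hn
  · exact lift_b _ hn
  · simp only [b_eq_one hn, partialRelator_eq_one hn, partialRelator_eq_one (hn.trans n.le_succ),
      map_one, inv_one, mul_one]

lemma conjX_partialRelator (n : ℕ) : conjX g (Z g n) = (R g n)⁻¹ * (Z g n)⁻¹ * R g n := by
  rw [← commutatorProd_conjX, partialRelator, map_commutatorProd]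
  exact congrArg₂ (commutatorProd · · n) (funext conjX_a) (funext conjX_b)

lemma conjY_partialRelator (n : ℕ) : conjY g (Z g n) = (Z g n)⁻¹ := by
  rw [← commutatorProd_conjY, partialRelator, map_commutatorProd]
  exact congrArg₂ (commutatorProd · · n) (funext conjY_a) (funext conjY_b)

lemma conjX_bProd (n : ℕ) : conjX g (R g n) = (R g n)⁻¹ := by
  induction n with
  | zero => rw [bProd_zero, map_one, inv_one]
  | succ n ih => rw [bProd_succ, map_mul, ih, conjX_b, bProd_succ]; group

lemma conjY_bProd (n : ℕ) : conjY g (R g n) = Z g n * R g n := by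
  induction n with
  | zero => rw [bProd_zero, map_one, partialRelator_zero, one_mul]
  | succ n ih => rw [bProd_succ, map_mul, ih, conjY_b]; group

lemma conjX_conjX (z : SurfaceGroup g) : conjX g (conjX g z) = z := by
  suffices h : (conjX g).comp (conjX g) = MonoidHom.id _ from DFunLike.congr_fun h z
  refine hom_ext (fun n _ => ?_) fun n _ => ?_ <;>
  · simp only [MonoidHom.comp_apply, MonoidHom.id_apply, conjX_a, conjX_b, map_mul, map_inv,
      conjX_bProd, conjX_partialRelator, bProd_succ]
    group

lemma conjY_conjY (z : SurfaceGroup g) : conjY g (conjY g z) = z := by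
  suffices h : (conjY g).comp (conjY g) = MonoidHom.id _ from DFunLike.congr_fun h z
  refine hom_ext (fun n _ => ?_) fun n _ => ?_ <;>
  · simp only [MonoidHom.comp_apply, MonoidHom.id_apply, conjY_a, conjY_b, map_mul, map_inv,
      conjY_partialRelator]
    group

lemma conjX_conjY (z : SurfaceGroup g) : conjX g (conjY g z) = conjY g (conjX g z) := by
  suffices h : (conjX g).comp (conjY g) = (conjY g).comp (conjX g) from DFunLike.congr_fun h z
  refine hom_ext (fun n _ => ?_) fun n _ => ?_ <;>
  · simp only [MonoidHom.comp_apply, conjX_a, conjX_b, conjY_a, conjY_b, map_mul, map_inv,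
      conjY_bProd, conjX_partialRelator, conjY_partialRelator]
    group

/-- The element `y₀ yₙ` of the polygon group, as an element of the surface group. -/
def yProd (g : ℕ) : ℕ → SurfaceGroup g
  | 0 => 1
  | n + 1 => Z g n * a g n

lemma conjY_yProd (n : ℕ) : conjY g (yProd g n) = (yProd g n)⁻¹ := by
  cases n with
  | zero => rw [yProd, map_one, inv_one]
  | succ n => rw [yProd, map_mul, conjY_partialRelator, conjY_a]; group

lemma conjX_yProd_self (n : ℕ) :
    conjX g (yProd g n) = (R g n)⁻¹ * (Z g n)⁻¹ * yProd g n * R g n := by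
  cases n with
  | zero => simp only [yProd, map_one, bProd_zero, partialRelator_zero, inv_one, mul_one]
  | succ n =>
    simp only [yProd, map_mul, conjX_partialRelator, conjX_a, bProd_succ, partialRelator_succ,
      commutatorElement_def]
    group

lemma conjX_yProd_succ (n : ℕ) :
    conjX g (yProd g (n + 1)) = (R g n)⁻¹ * (Z g n)⁻¹ * yProd g (n + 1) * R g n := by
  simp only [yProd, map_mul, conjX_partialRelator, conjX_a]
  group

/-- The action of the reflection `xₙ` of the polygon group on the coset space `Γ_g` of the
four-group `⟨x₀, y₀⟩`. -/
def permX (g n : ℕ) : Equiv.Perm (SurfaceGroup g) :=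
  have hinv : Function.Involutive fun z => R g n * conjX g z := fun z => by
    dsimp only
    rw [map_mul, conjX_bProd, conjX_conjX, mul_inv_cancel_left]
  hinv.toPerm

/-- The action of the reflection `yₙ` of the polygon group on the coset space `Γ_g` of the
four-group `⟨x₀, y₀⟩`. -/
def permY (g n : ℕ) : Equiv.Perm (SurfaceGroup g) :=
  have hinv : Function.Involutive fun z => (yProd g n)⁻¹ * conjY g z := fun z => by
    dsimp only
    rw [map_mul, map_inv, conjY_conjY, conjY_yProd, inv_inv, inv_mul_cancel_left]
  hinv.toPerm

lemma permX_apply (n : ℕ) (z : SurfaceGroup g) : permX g n z = R g n * conjX g z := rfl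

lemma permY_apply (n : ℕ) (z : SurfaceGroup g) : permY g n z = (yProd g n)⁻¹ * conjY g z := rfl

lemma permX_mul_self (n : ℕ) : permX g n * permX g n = 1 :=
  Equiv.ext (permX g n).left_inv

lemma permY_mul_self (n : ℕ) : permY g n * permY g n = 1 :=
  Equiv.ext (permY g n).left_inv

lemma commute_permX_permY_self (n : ℕ) : Commute (permX g n) (permY g n) := by
  ext1 z
  simp only [Equiv.Perm.mul_apply, permX_apply, permY_apply, map_mul, map_inv, conjX_yProd_self,
    conjY_bProd, conjX_conjY]
  group

lemma commute_permX_permY_succ (n : ℕ) : Commute (permX g n) (permY g (n + 1)) := by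
  ext1 z
  simp only [Equiv.Perm.mul_apply, permX_apply, permY_apply, map_mul, map_inv, conjX_yProd_succ,
    conjY_bProd, conjX_conjY]
  group

lemma permY_genus_add_one : permY g (g + 1) = permY g 0 := by
  ext1 z
  rw [permY_apply, permY_apply, yProd, yProd, partialRelator_eq_one le_rfl, a_eq_one le_rfl,
    one_mul]

lemma permX_mul_permX (n : ℕ) (z : SurfaceGroup g) :
    permX g (n + 1) (permX g n z) = b g n * z := by
  simp only [permX_apply, map_mul, conjX_bProd, conjX_conjX, bProd_succ]
  group

lemma permX_permY_permX_permY (n : ℕ) (z : SurfaceGroup g) :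
    permX g n (permY g 0 (permX g n (permY g (n + 1) z))) = a g n * z := by
  simp only [permX_apply, permY_apply, yProd, map_mul, map_inv, inv_one, one_mul, conjX_conjY,
    conjY_conjY, conjX_conjX, conjX_a, conjX_bProd, conjX_partialRelator,
    conjY_a, conjY_bProd, conjY_partialRelator]
  group

/-- The permutation by which the reflection in the `i`-th side of the polygon acts: the sides are
`y₀, x₀, y₁, x₁, …, y_g, x_g` in cyclic order. -/
def permSide (i : Fin (2 * g + 2)) : Equiv.Perm (SurfaceGroup g) :=
  if i.val % 2 = 0 then permY g (i.val / 2) else permX g (i.val / 2)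

/-- The side `xₙ` of the polygon. -/
def sideX (g n : ℕ) : Fin (2 * g + 2) := Fin.ofNat _ (2 * n + 1)

/-- The side `yₙ` of the polygon. -/
def sideY (g n : ℕ) : Fin (2 * g + 2) := Fin.ofNat _ (2 * n)

lemma permSide_sideX {n : ℕ} (hn : n ≤ g) : permSide (sideX g n) = permX g n := by
  have hval : (sideX g n).val = 2 * n + 1 := Nat.mod_eq_of_lt (by omega)
  rw [permSide, hval, if_neg (by omega), show (2 * n + 1) / 2 = n by omega]

lemma sideY_genus_add_one : sideY g (g + 1) = sideY g 0 :=
  Fin.ext <| by simp [sideY, mul_add]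

lemma permSide_sideY {n : ℕ} (hn : n ≤ g + 1) : permSide (sideY g n) = permY g n := by
  obtain hn | rfl := Nat.lt_or_eq_of_le hn
  · have hval : (sideY g n).val = 2 * n := Nat.mod_eq_of_lt (by omega)
    rw [permSide, hval, if_pos (by omega), Nat.mul_div_cancel_left n two_pos]
  · have hval : (sideY g 0).val = 0 := Nat.zero_mod _
    rw [sideY_genus_add_one, permY_genus_add_one, permSide, hval]
    rfl

lemma permSide_mul_self (i : Fin (2 * g + 2)) : permSide i * permSide i = 1 := by
  unfold permSide
  split_ifs
  exacts [permY_mul_self _, permX_mul_self _]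

lemma exists_eq_sideX_or_sideY (i : Fin (2 * g + 2)) :
    ∃ n ≤ g, i = sideX g n ∨ i = sideY g n := by
  refine ⟨i.val / 2, by omega, ?_⟩
  rcases Nat.mod_two_eq_zero_or_one i.val with hi | hi
  · exact .inr (Fin.ext (by simp only [sideY, Fin.val_ofNat]; rw [Nat.mod_eq_of_lt] <;> omega))
  · exact .inl (Fin.ext (by simp only [sideX, Fin.val_ofNat]; rw [Nat.mod_eq_of_lt] <;> omega))

lemma sideX_add_one (n : ℕ) : sideX g n + 1 = sideY g (n + 1) := by
  apply Fin.ext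
  simp [sideX, sideY, Fin.val_add, mul_add, add_assoc]

lemma sideY_add_one (n : ℕ) : sideY g n + 1 = sideX g n := by
  apply Fin.ext
  simp [sideX, sideY, Fin.val_add]

lemma commute_permSide_add_one (i : Fin (2 * g + 2)) :
    Commute (permSide i) (permSide (i + 1)) := by
  obtain ⟨n, hn, rfl | rfl⟩ := exists_eq_sideX_or_sideY i
  · rw [sideX_add_one, permSide_sideX hn, permSide_sideY (Nat.succ_le_succ hn)]
    exact commute_permX_permY_succ n
  · rw [sideY_add_one, permSide_sideX hn, permSide_sideY (hn.trans g.le_succ)]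
    exact (commute_permX_permY_self n).symm

lemma adj_add_one (i : Fin (2 * g + 2)) : (SimpleGraph.cycleGraph (2 * g + 2)).Adj i (i + 1) :=
  SimpleGraph.cycleGraph_adj.mpr (.inr (add_sub_cancel_left i 1))

lemma commute_permSide_of_adj {i j : Fin (2 * g + 2)}
    (hij : (SimpleGraph.cycleGraph (2 * g + 2)).Adj i j) : Commute (permSide i) (permSide j) := by
  rcases SimpleGraph.cycleGraph_adj.mp hij with h | h
  · rw [sub_eq_iff_eq_add'.mp h]
    simpa only [add_comm] using (commute_permSide_add_one j).symm
  · rw [sub_eq_iff_eq_add'.mp h]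
    simpa only [add_comm] using commute_permSide_add_one i

section PolygonGroup

variable {W : Type*} [Group W]
  (cs : CoxeterSystem (rightAngledCoxeterMatrix (SimpleGraph.cycleGraph (2 * g + 2))) W)

lemma commute_simple_sideX_sideY_self (n : ℕ) :
    Commute (cs.simple (sideX g n)) (cs.simple (sideY g n)) :=
  commute_simple_of_adj cs (sideY_add_one (g := g) n ▸ adj_add_one (sideY g n)).symm

lemma commute_simple_sideX_sideY_succ (n : ℕ) :
    Commute (cs.simple (sideX g n)) (cs.simple (sideY g (n + 1))) :=
  commute_simple_of_adj cs (sideX_add_one (g := g) n ▸ adj_add_one (sideX g n))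

/-- The embedding of the surface group into the group generated by the reflections in the sides of
a right-angled `(2g+2)`-gon. -/
def toPolygonGroup : SurfaceGroup g →* W :=
  lift (fun n => cs.simple (sideX g n) * cs.simple (sideY g 0) * cs.simple (sideX g n) *
      cs.simple (sideY g (n + 1)))
    (fun n => cs.simple (sideX g (n + 1)) * cs.simple (sideX g n)) <| by
    rw [commutatorProd_of_involutions (fun n => cs.simple_mul_simple_self _)
      (fun n => cs.simple_mul_simple_self _) (commute_simple_sideX_sideY_self cs)
      (commute_simple_sideX_sideY_succ cs), ← sideY_genus_add_one,
      (commute_simple_sideX_sideY_succ cs g).eq, mul_assoc, cs.simple_mul_simple_self, mul_one,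
      cs.simple_mul_simple_self]

/-- The permutation action of the polygon group on the surface group. -/
def polygonGroupPerm : W →* Equiv.Perm (SurfaceGroup g) :=
  cs.lift ⟨permSide, isLiftable_rightAngledCoxeterMatrix permSide_mul_self
    fun _ _ => commute_permSide_of_adj⟩

lemma polygonGroupPerm_simple (i : Fin (2 * g + 2)) :
    polygonGroupPerm cs (cs.simple i) = permSide i :=
  cs.lift_apply_simple _ i

lemma polygonGroupPerm_comp_toPolygonGroup :
    (polygonGroupPerm cs).comp (toPolygonGroup cs) =
      MulAction.toPermHom (SurfaceGroup g) (SurfaceGroup g) := by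
  refine hom_ext (fun n hn => Equiv.ext fun z => ?_) fun n hn => Equiv.ext fun z => ?_
  · simp only [MonoidHom.comp_apply, toPolygonGroup, lift_a _ hn, map_mul,
      polygonGroupPerm_simple, permSide_sideX hn.le, permSide_sideY (Nat.zero_le _),
      permSide_sideY (Nat.succ_le_succ hn.le), Equiv.Perm.mul_apply]
    exact permX_permY_permX_permY n z
  · simp only [MonoidHom.comp_apply, toPolygonGroup, lift_b _ hn, map_mul,
      polygonGroupPerm_simple, permSide_sideX hn.le, permSide_sideX (Nat.succ_le_of_lt hn),
      Equiv.Perm.mul_apply]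
    exact permX_mul_permX n z

lemma toPolygonGroup_injective : Function.Injective (toPolygonGroup cs) := by
  have hinj : Function.Injective ((polygonGroupPerm cs).comp (toPolygonGroup cs)) := by
    rw [polygonGroupPerm_comp_toPolygonGroup]
    exact MulAction.toPerm_injective
  rw [MonoidHom.coe_comp] at hinj
  exact hinj.of_comp

end PolygonGroup

end SurfaceGroup

section Words

variable {S : Type*}

/-- The letters of a word which can be moved to its front by commuting adjacent letters of the
graph `Γ` past each other. -/
def initialLetters (Γ : SimpleGraph S) : List S → Set S
  | [] => ∅
  | i :: w => insert i (initialLetters Γ w ∩ Γ.neighborSet i)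

/-- The words which no sequence of commutations of letters adjacent in `Γ` and cancellations of
equal consecutive letters can shorten. -/
def IsGraphReduced (Γ : SimpleGraph S) : List S → Prop
  | [] => True
  | i :: w => i ∉ initialLetters Γ w ∧ IsGraphReduced Γ w

variable {Γ : SimpleGraph S}

lemma mem_initialLetters_cons {i j : S} {w : List S} :
    j ∈ initialLetters Γ (i :: w) ↔ j = i ∨ j ∈ initialLetters Γ w ∧ Γ.Adj i j :=
  Iff.rfl

variable [DecidableEq S] [DecidableRel Γ.Adj] {W : Type*} [Group W]
  (cs : CoxeterSystem (rightAngledCoxeterMatrix Γ) W)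

lemma exists_wordProd_eq_simple_mul {i : S} {w : List S} (hi : i ∈ initialLetters Γ w) :
    ∃ w' : List S, w.length = w'.length + 1 ∧ cs.wordProd w = cs.simple i * cs.wordProd w' := by
  induction w with
  | nil => exact hi.elim
  | cons k w ih =>
    rcases mem_initialLetters_cons.mp hi with rfl | ⟨hiw, hadj⟩
    · exact ⟨w, rfl, cs.wordProd_cons _ _⟩
    · obtain ⟨w', hlen, hprod⟩ := ih hiw
      refine ⟨k :: w', by rw [List.length_cons, hlen, List.length_cons], ?_⟩
      rw [cs.wordProd_cons, hprod, cs.wordProd_cons]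
      exact (commute_simple_of_adj cs hadj).left_comm _

variable {cs} in
lemma isGraphReduced_of_isReduced {w : List S} (hw : cs.IsReduced w) : IsGraphReduced Γ w := by
  induction w with
  | nil => trivial
  | cons i w ih =>
    refine ⟨fun hi => ?_, ih (hw.drop 1)⟩
    obtain ⟨w', hlen, hprod⟩ := exists_wordProd_eq_simple_mul cs hi
    have hlen' := cs.length_wordProd_le w'
    rw [CoxeterSystem.IsReduced, cs.wordProd_cons, hprod, cs.simple_mul_simple_cancel_left,
      List.length_cons] at hw
    omega

end Words

/-! ### The numbers game -/

section NumbersGame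

variable {S R : Type*} [CommRing R]

/-- A move of the numbers game with weights `b`: firing the vertex `i` in the position `u`. The
position of a vector records its pairings with the roots, whose mutual pairings are `b`, and firing
`i` corresponds to reflecting the vector in the `i`-th root. -/
def fire (b : S → S → R) (i : S) (u : S → R) : S → R := fun j => u j + 2 * b j i * u i

/-- The position of the numbers game started at `u₀` after the letters of `w` are fired, from right
to left. -/
def play (b : S → S → R) (u₀ : S → R) : List S → S → R
  | [] => u₀
  | i :: w => fire b i (play b u₀ w)

/-- The sum of the values at which the letters of the word are fired. -/
def firedSum (b : S → S → R) (u₀ : S → R) : List S → R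
  | [] => 0
  | i :: w => firedSum b u₀ w + play b u₀ w i

lemma play_map {R' : Type*} [CommRing R'] (f : R →+* R') (b : S → S → R) (u₀ : S → R)
    (w : List S) (j : S) :
    play (fun i j => f (b i j)) (fun i => f (u₀ i)) w j = f (play b u₀ w j) := by
  induction w generalizing j with
  | nil => rfl
  | cons i w ih => simp only [play, fire, ih, map_add, map_mul, map_ofNat]

lemma firedSum_map {R' : Type*} [CommRing R'] (f : R →+* R') (b : S → S → R) (u₀ : S → R)
    (w : List S) :
    firedSum (fun i j => f (b i j)) (fun i => f (u₀ i)) w = f (firedSum b u₀ w) := by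
  induction w with
  | nil => exact (map_zero f).symm
  | cons i w ih => rw [firedSum, firedSum, ih, play_map, map_add]

/-- The weights of the numbers game of a right-angled reflection group in which any two
non-adjacent walls are at least a definite distance apart, `m` measuring that distance: positivity
is with respect to the cone `P`. -/
structure IsExpanding (Γ : SimpleGraph S) (P : Subsemiring R) (m : R) (b : S → S → R) : Prop where
  diag : ∀ i, b i i = -1
  adj : ∀ i j, Γ.Adj i j → b i j = 0
  far : ∀ i j, i ≠ j → ¬Γ.Adj i j → 2 * b i j - (m + 1) ∈ P
  one_le : m - 1 ∈ P

/-- The positions whose values are positive off the clique `D`, and stay so when the value at a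
non-adjacent vertex of `D` is added with any factor between `-m` and `m`. -/
structure IsDominant (Γ : SimpleGraph S) (P : Subsemiring R) (m : R) (D : Set S) (u : S → R) :
    Prop where
  clique : Γ.IsClique D
  nonneg : ∀ j ∉ D, u j ∈ P
  dominates : ∀ d ∈ D, ∀ j ∉ D, ¬Γ.Adj d j → ∀ c, m - c ∈ P → m + c ∈ P → u j + c * u d ∈ P

variable {Γ : SimpleGraph S} {P : Subsemiring R} {m : R} {b : S → S → R} {u u₀ : S → R}

namespace IsExpanding

lemma map {R' : Type*} [CommRing R'] {P' : Subsemiring R'} (hb : IsExpanding Γ P m b)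
    (f : R →+* R') (hf : ∀ x ∈ P, f x ∈ P') :
    IsExpanding Γ P' (f m) fun i j => f (b i j) where
  diag i := by rw [hb.diag, map_neg, map_one]
  adj i j hij := by rw [hb.adj i j hij, map_zero]
  far i j hne hij := by
    simpa only [map_sub, map_add, map_mul, map_one, map_ofNat] using hf _ (hb.far i j hne hij)
  one_le := by simpa only [map_sub, map_one] using hf _ hb.one_le

variable (hb : IsExpanding Γ P m b)
include hb

lemma m_mem : m ∈ P := by
  simpa only [sub_add_cancel] using add_mem hb.one_le P.one_mem

lemma two_mul_weight_mem {i j : S} (hne : i ≠ j) (hij : ¬Γ.Adj i j) : 2 * b i j ∈ P := by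
  simpa only [sub_add_cancel] using
    add_mem (hb.far i j hne hij) (add_mem hb.m_mem P.one_mem)

lemma fire_self (i : S) : fire b i u i = -u i := by
  rw [fire, hb.diag]; ring

lemma fire_of_adj {i j : S} (hij : Γ.Adj i j) : fire b i u j = u j := by
  rw [fire, hb.adj j i hij.symm]; ring

lemma add_mem_of_not_adj {D : Set S} (hu : IsDominant Γ P m D u) {i j : S} (hi : i ∉ D)
    (hij : ¬Γ.Adj i j) : u i + u j ∈ P := by
  by_cases hj : j ∈ D
  · have hm : m + 1 ∈ P := add_mem hb.m_mem P.one_mem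
    simpa only [one_mul] using
      hu.dominates j hj i hi (fun h => hij h.symm) 1 hb.one_le hm
  · exact add_mem (hu.nonneg i hi) (hu.nonneg j hj)

lemma fire_mem_of_not_adj {D : Set S} (hu : IsDominant Γ P m D u) {i j : S} (hi : i ∉ D)
    (hne : j ≠ i) (hij : ¬Γ.Adj i j) : fire b i u j ∈ P := by
  have hsplit : fire b i u j =
      (u i + u j) + (2 * b j i - (m + 1)) * u i + m * u i := by rw [fire]; ring
  rw [hsplit]
  exact add_mem (add_mem (hb.add_mem_of_not_adj hu hi hij)
    (mul_mem (hb.far j i hne fun h => hij h.symm) (hu.nonneg i hi)))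
    (mul_mem hb.m_mem (hu.nonneg i hi))

lemma isDominant_fire {D : Set S} (hu : IsDominant Γ P m D u) {i : S} (hi : i ∉ D) :
    IsDominant Γ P m (insert i (D ∩ Γ.neighborSet i)) (fire b i u) where
  clique := (hu.clique.subset Set.inter_subset_left).insert fun j hj _ => hj.2
  nonneg j hj := by
    simp only [Set.mem_insert_iff, Set.mem_inter_iff, SimpleGraph.mem_neighborSet, not_or,
      not_and'] at hj
    by_cases hij : Γ.Adj i j
    · rw [hb.fire_of_adj hij]
      exact hu.nonneg j (hj.2 hij)
    · exact hb.fire_mem_of_not_adj hu hi hj.1 hij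
  dominates d hd j hj hdj c hc₁ hc₂ := by
    simp only [Set.mem_insert_iff, Set.mem_inter_iff, SimpleGraph.mem_neighborSet, not_or,
      not_and'] at hj
    rcases hd with rfl | ⟨hdD, hid⟩
    · have hsplit : fire b d u j + c * fire b d u d =
          (2 * b j d - (m + 1)) * u d + (m - c) * u d + (u d + u j) := by
        rw [hb.fire_self, fire]; ring
      rw [hsplit]
      exact add_mem (add_mem
        (mul_mem (hb.far j d hj.1 fun h => hdj h.symm) (hu.nonneg d hi))
        (mul_mem hc₁ (hu.nonneg d hi))) (hb.add_mem_of_not_adj hu hi hdj)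
    · rw [hb.fire_of_adj hid]
      have hjD : j ∉ D := fun hjD => by
        rcases eq_or_ne d j with rfl | hne
        · exact hj.2 hid hjD
        · exact hdj (hu.clique hdD hjD hne)
      have hdom := hu.dominates d hdD j hjD hdj c hc₁ hc₂
      by_cases hij : Γ.Adj i j
      · rwa [hb.fire_of_adj hij]
      · rw [fire, add_right_comm]
        exact add_mem hdom
          (mul_mem (hb.two_mul_weight_mem hj.1 fun h => hij h.symm) (hu.nonneg i hi))

variable (hu₀ : ∀ j, u₀ j ∈ P) {w : List S}
include hu₀

lemma isDominant_play (hw : IsGraphReduced Γ w) :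
    IsDominant Γ P m (initialLetters Γ w) (play b u₀ w) := by
  induction w with
  | nil =>
    exact ⟨SimpleGraph.isClique_empty, fun j _ => hu₀ j, fun _ hd => hd.elim⟩
  | cons i w ih => exact hb.isDominant_fire (ih hw.2) hw.1

lemma firedSum_mem (hw : IsGraphReduced Γ w) : firedSum b u₀ w ∈ P := by
  induction w with
  | nil => exact P.zero_mem
  | cons i w ih => exact add_mem (ih hw.2) ((hb.isDominant_play hu₀ hw.2).nonneg i hw.1)

end IsExpanding

end NumbersGame

/-! ### Growth of the numbers game over the reals -/

section RealNumbersGame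

variable {S : Type*} {Γ : SimpleGraph S} {m c r r' : ℝ} {b : S → S → ℝ} {u₀ : S → ℝ}
  {w : List S}

lemma abs_play_le (hb : IsExpanding Γ (.nonneg ℝ) m b) (hu₀ : ∀ j, 0 ≤ u₀ j)
    (hu₀r' : ∀ j, u₀ j ≤ r') (hbc : ∀ i j, |b i j| ≤ c) (hw : IsGraphReduced Γ w) (j : S) :
    |play b u₀ w j| ≤ r' + 2 * c * firedSum b u₀ w := by
  induction w generalizing j with
  | nil => simpa only [play, firedSum, mul_zero, add_zero, abs_of_nonneg (hu₀ j)] using hu₀r' j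
  | cons i w ih =>
    have hi : 0 ≤ play b u₀ w i := (hb.isDominant_play hu₀ hw.2).nonneg i hw.1
    calc |play b u₀ w j + 2 * b j i * play b u₀ w i|
        ≤ |play b u₀ w j| + 2 * |b j i| * play b u₀ w i := by
          grw [abs_add_le, abs_mul, abs_mul, abs_two, abs_of_nonneg hi]
      _ ≤ (r' + 2 * c * firedSum b u₀ w) + 2 * c * play b u₀ w i := by
          gcongr
          exacts [ih hw.2 j, hbc j i]
      _ = r' + 2 * c * firedSum b u₀ (i :: w) := by rw [firedSum]; ring

lemma firedSum_le (hb : IsExpanding Γ (.nonneg ℝ) m b) (hu₀ : ∀ j, 0 ≤ u₀ j)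
    (hu₀r' : ∀ j, u₀ j ≤ r') (hr' : 0 ≤ r') (hc : 0 ≤ c) (hbc : ∀ i j, |b i j| ≤ c)
    (hw : IsGraphReduced Γ w) : firedSum b u₀ w ≤ r' * (2 + 2 * c) ^ w.length := by
  induction w with
  | nil => simpa only [firedSum, List.length_nil, pow_zero, mul_one] using hr'
  | cons i w ih =>
    have hpow : 1 ≤ (2 + 2 * c) ^ w.length := one_le_pow₀ (by linarith)
    have hplay := (le_abs_self _).trans (abs_play_le hb hu₀ hu₀r' hbc hw.2 i)
    calc firedSum b u₀ w + play b u₀ w i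
        ≤ (1 + 2 * c) * firedSum b u₀ w + r' * 1 := by linarith
      _ ≤ (1 + 2 * c) * (r' * (2 + 2 * c) ^ w.length) + r' * (2 + 2 * c) ^ w.length := by
          gcongr
          exact ih hw.2
      _ = r' * (2 + 2 * c) ^ (i :: w).length := by rw [List.length_cons, pow_succ]; ring

/- Each time a letter is fired, its value is multiplied by at least `m` before it can be fired
again. -/
lemma mul_pow_count_le [DecidableEq S] (hb : IsExpanding Γ (.nonneg ℝ) m b) (hr : 0 ≤ r)
    (hu₀r : ∀ j, r ≤ u₀ j) (hw : IsGraphReduced Γ w) (j : S) :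
    (j ∉ initialLetters Γ w → r * m ^ w.count j ≤ play b u₀ w j) ∧
      (j ∈ initialLetters Γ w → r * m ^ w.count j ≤ m * -play b u₀ w j) := by
  induction w generalizing j with
  | nil => exact ⟨fun _ => by simpa only [List.count_nil, pow_zero, mul_one, play] using hu₀r j,
      fun hj => hj.elim⟩
  | cons i w ih =>
    have hm : 1 ≤ m := sub_nonneg.mp hb.one_le
    have hdom := hb.isDominant_play (fun j => hr.trans (hu₀r j)) hw.2
    have hi : 0 ≤ play b u₀ w i := hdom.nonneg i hw.1
    rcases eq_or_ne j i with rfl | hne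
    · refine ⟨fun hj => (hj (.inl rfl)).elim, fun _ => ?_⟩
      rw [play, hb.fire_self, neg_neg, List.count_cons_self, pow_succ]
      nlinarith [(ih hw.2 j).1 hw.1]
    rw [List.count_cons_of_ne hne.symm, mem_initialLetters_cons, or_iff_right hne]
    by_cases hij : Γ.Adj i j
    · rw [play, hb.fire_of_adj hij, and_iff_left hij]
      exact ih hw.2 j
    refine ⟨fun _ => ?_, fun hj => (hij hj.2).elim⟩
    have hfar : 0 ≤ 2 * b j i - (m + 1) := hb.far j i hne fun h => hij h.symm
    have hmul : 0 ≤ (2 * b j i - (m + 1)) * play b u₀ w i := mul_nonneg hfar hi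
    rw [play, fire]
    by_cases hj : j ∈ initialLetters Γ w
    · have hadd : 0 ≤ play b u₀ w i + play b u₀ w j := hb.add_mem_of_not_adj hdom hw.1 hij
      have hdom_m : 0 ≤ play b u₀ w i + m * play b u₀ w j :=
        hdom.dominates j hj i hw.1 (fun h => hij h.symm) m (sub_self m).ge
          (show (0 : ℝ) ≤ m + m by linarith)
      nlinarith [(ih hw.2 j).2 hj]
    · nlinarith [(ih hw.2 j).1 hj]

lemma mul_pow_count_le_mul_abs [DecidableEq S] (hb : IsExpanding Γ (.nonneg ℝ) m b) (hr : 0 ≤ r)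
    (hu₀r : ∀ j, r ≤ u₀ j) (hw : IsGraphReduced Γ w) (j : S) :
    r * m ^ w.count j ≤ m * |play b u₀ w j| := by
  have hm : 1 ≤ m := sub_nonneg.mp hb.one_le
  obtain ⟨hpos, hneg⟩ := mul_pow_count_le hb hr hu₀r hw j
  by_cases hj : j ∈ initialLetters Γ w
  · exact (hneg hj).trans (mul_le_mul_of_nonneg_left (neg_le_abs _) (by linarith))
  · exact (hpos hj).trans ((le_abs_self _).trans (le_mul_of_one_le_left (abs_nonneg _) hm))

lemma pow_length_le [Fintype S] (hb : IsExpanding Γ (.nonneg ℝ) m b) (hr : 0 ≤ r)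
    (hu₀r : ∀ j, r ≤ u₀ j) (hu₀r' : ∀ j, u₀ j ≤ r') (hbc : ∀ i j, |b i j| ≤ c)
    (hw : IsGraphReduced Γ w) :
    r ^ Fintype.card S * m ^ w.length ≤
      (m * (r' + 2 * c * firedSum b u₀ w)) ^ Fintype.card S := by
  classical
  have hm : 0 ≤ m := hb.m_mem
  calc r ^ Fintype.card S * m ^ w.length = ∏ j, r * m ^ w.count j := by
        rw [Finset.prod_mul_distrib, Finset.prod_const, Finset.prod_pow_eq_pow_sum,
          Finset.card_univ, ← Multiset.coe_card,
          ← Multiset.sum_count_eq_card fun j _ => Finset.mem_univ j]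
        simp only [Multiset.coe_count]
    _ ≤ ∏ _j : S, m * (r' + 2 * c * firedSum b u₀ w) := by
        refine Finset.prod_le_prod (fun j _ => by positivity) fun j _ => ?_
        grw [mul_pow_count_le_mul_abs hb hr hu₀r hw j,
          abs_play_le hb (fun j => hr.trans (hu₀r j)) hu₀r' hbc hw j]
    _ = (m * (r' + 2 * c * firedSum b u₀ w)) ^ Fintype.card S := by
        rw [Finset.prod_const, Finset.card_univ]

lemma exists_length_le_of_firedSum_le [Fintype S] {m₁ c₁ r₁ : ℝ} {b₁ : S → S → ℝ} {u₁ : S → ℝ}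
    (hb : IsExpanding Γ (.nonneg ℝ) m b) (hr : 0 < r) (hu₀r : ∀ j, r ≤ u₀ j)
    (hu₀r' : ∀ j, u₀ j ≤ r') (hr' : 0 ≤ r') (hc : 0 ≤ c) (hbc : ∀ i j, |b i j| ≤ c)
    (hb₁ : IsExpanding Γ (.nonneg ℝ) m₁ b₁) (hu₁ : ∀ j, 0 ≤ u₁ j) (hu₁r₁ : ∀ j, u₁ j ≤ r₁)
    (hr₁ : 0 ≤ r₁) (hc₁ : 0 ≤ c₁) (hbc₁ : ∀ i j, |b₁ i j| ≤ c₁)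
    (hm : 2 * (2 + 2 * c₁) ^ Fintype.card S ≤ m) {Q : ℝ} (hQ : 0 ≤ Q) :
    ∃ n₀ : ℕ, ∀ w, IsGraphReduced Γ w →
      1 + 2 * firedSum b u₀ w ≤ Q * (1 + 2 * firedSum b₁ u₁ w) → w.length ≤ n₀ := by
  set N := Fintype.card S
  set A := 2 + 2 * c₁
  set K := m * ((r' + c) * (Q * (1 + 2 * r₁)))
  have hA : 1 ≤ A := by linarith
  obtain ⟨n₀, hn₀⟩ := pow_unbounded_of_one_lt (K ^ N / r ^ N) one_lt_two
  refine ⟨n₀, fun w hw hratio => ?_⟩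
  have hm₀ : 0 ≤ m := hb.m_mem
  have hsum : 0 ≤ firedSum b u₀ w := hb.firedSum_mem (fun j => hr.le.trans (hu₀r j)) hw
  have hsum_one : 1 + 2 * firedSum b₁ u₁ w ≤ (1 + 2 * r₁) * A ^ w.length := by
    have := firedSum_le hb₁ hu₁ hu₁r₁ hr₁ hc₁ hbc₁ hw
    linarith [one_le_pow₀ hA (n := w.length)]
  have hbase : m * (r' + 2 * c * firedSum b u₀ w) ≤ K * A ^ w.length :=
    calc m * (r' + 2 * c * firedSum b u₀ w)
        ≤ m * ((r' + c) * (1 + 2 * firedSum b u₀ w)) := by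
          gcongr
          nlinarith [mul_nonneg hr' hsum]
      _ ≤ m * ((r' + c) * (Q * ((1 + 2 * r₁) * A ^ w.length))) := by
          grw [hratio, hsum_one]
      _ = K * A ^ w.length := by ring
  have hgrowth : 2 ^ w.length * (A ^ N) ^ w.length ≤ K ^ N / r ^ N * (A ^ N) ^ w.length :=
    calc 2 ^ w.length * (A ^ N) ^ w.length = (2 * A ^ N) ^ w.length := (mul_pow _ _ _).symm
      _ ≤ m ^ w.length := by gcongr
      _ ≤ (m * (r' + 2 * c * firedSum b u₀ w)) ^ N / r ^ N := by
          rw [le_div_iff₀' (by positivity)]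
          exact pow_length_le hb hr.le hu₀r hu₀r' hbc hw
      _ ≤ (K * A ^ w.length) ^ N / r ^ N := by gcongr
      _ = K ^ N / r ^ N * (A ^ N) ^ w.length := by rw [mul_pow, pow_right_comm]; ring
  have htwo : (2 : ℝ) ^ w.length ≤ K ^ N / r ^ N := le_of_mul_le_mul_right hgrowth (by positivity)
  exact ((pow_lt_pow_iff_right₀ one_lt_two).mp (htwo.trans_lt hn₀)).le

end RealNumbersGame

/-! ### Polynomials with nonnegative coefficients -/

/-- The real polynomials with nonnegative coefficients. -/
def nonnegPolynomials : Subsemiring (Polynomial ℝ) where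
  carrier := {p | ∀ k, 0 ≤ p.coeff k}
  zero_mem' _ := le_rfl
  one_mem' k := by rw [Polynomial.coeff_one]; split_ifs <;> norm_num
  add_mem' hp hq k := by rw [Polynomial.coeff_add]; exact add_nonneg (hp k) (hq k)
  mul_mem' hp hq k := by
    rw [Polynomial.coeff_mul]
    exact Finset.sum_nonneg fun _ _ => mul_nonneg (hp _) (hq _)

section NonnegPolynomials

open Polynomial

variable {p : ℝ[X]} {t : ℝ}

lemma C_mem_nonnegPolynomials {x : ℝ} (hx : 0 ≤ x) : C x ∈ nonnegPolynomials := fun k => by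
  rw [coeff_C]
  split_ifs
  exacts [hx, le_rfl]

lemma X_mem_nonnegPolynomials : X ∈ nonnegPolynomials := fun k => by
  rw [coeff_X]
  split_ifs <;> norm_num

lemma coeff_zero_le_eval (hp : p ∈ nonnegPolynomials) (ht : 0 ≤ t) : p.coeff 0 ≤ p.eval t := by
  rw [eval_eq_sum_range, Finset.sum_range_succ', pow_zero, mul_one]
  exact le_add_of_nonneg_left
    (Finset.sum_nonneg fun k _ => mul_nonneg (hp _) (pow_nonneg ht _))

lemma eval_nonneg (hp : p ∈ nonnegPolynomials) (ht : 0 ≤ t) : 0 ≤ p.eval t :=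
  (hp 0).trans (coeff_zero_le_eval hp ht)

lemma mul_eval_sub_le_mul_eval_derivative (hp : p ∈ nonnegPolynomials) (ht : 1 ≤ t) (n : ℕ) :
    n * (p.eval t - t ^ n * p.eval 1) ≤ t * p.derivative.eval t := by
  have hterm (k : ℕ) : n * (t ^ k - t ^ n) ≤ k * t ^ k := by
    rcases le_total n k with hnk | hkn
    · calc n * (t ^ k - t ^ n) ≤ n * t ^ k := by
            gcongr
            exact sub_le_self _ (by positivity)
        _ ≤ k * t ^ k := by gcongr
    · have hpow : t ^ k ≤ t ^ n := pow_le_pow_right₀ ht hkn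
      exact (mul_nonpos_of_nonneg_of_nonpos n.cast_nonneg (sub_nonpos.mpr hpow)).trans
        (by positivity)
  have hderiv (k : ℕ) : t * (p.coeff k * k * t ^ (k - 1)) = p.coeff k * (k * t ^ k) := by
    cases k with
    | zero => simp only [Nat.cast_zero, mul_zero, zero_mul]
    | succ k => rw [Nat.add_sub_cancel, pow_succ]; ring
  rw [derivative_eval, sum_def, eval_eq_sum, sum_def, eval_eq_sum, sum_def, Finset.mul_sum,
    Finset.mul_sum, ← Finset.sum_sub_distrib, Finset.mul_sum]
  refine Finset.sum_le_sum fun k _ => ?_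
  rw [hderiv, one_pow, mul_one]
  calc n * (p.coeff k * t ^ k - t ^ n * p.coeff k)
      = p.coeff k * (n * (t ^ k - t ^ n)) := by ring
    _ ≤ p.coeff k * (k * t ^ k) := mul_le_mul_of_nonneg_left (hterm k) (hp k)

/- If the logarithmic derivative of `p` at `t` is small compared with `n`, then the terms of degree
at least `n` cannot dominate `p.eval t`. -/
lemma eval_le_of_eval_derivative_le (hp : p ∈ nonnegPolynomials) (ht : 1 ≤ t) {Q : ℝ} {n : ℕ}
    (hn : 2 * t * Q < n) (hn₀ : 0 < n) (hQ : p.derivative.eval t ≤ Q * p.eval t) :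
    p.eval t ≤ 2 * t ^ n * p.eval 1 := by
  have hmain := mul_eval_sub_le_mul_eval_derivative hp ht n
  have hp₀ := eval_nonneg hp (zero_le_one.trans ht)
  have hbound : n * (p.eval t - t ^ n * p.eval 1) ≤ n * (p.eval t / 2) :=
    calc n * (p.eval t - t ^ n * p.eval 1) ≤ t * (Q * p.eval t) := by grw [hmain, hQ]
      _ = (2 * t * Q) * (p.eval t / 2) := by ring
      _ ≤ n * (p.eval t / 2) := by gcongr
  have := le_of_mul_le_mul_left hbound (Nat.cast_pos.mpr hn₀)
  linarith

end NonnegPolynomials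

section PolynomialNumbersGame

open Polynomial Filter

variable {S : Type*} {Γ : SimpleGraph S} {m : ℝ[X]} {b : S → S → ℝ[X]} {u₀ : S → ℝ[X]}

lemma IsExpanding.eval (hb : IsExpanding Γ nonnegPolynomials m b) {τ : ℝ} (hτ : 0 ≤ τ) :
    IsExpanding Γ (.nonneg ℝ) (m.eval τ) fun i j => (b i j).eval τ :=
  hb.map (evalRingHom τ) fun _ hp => eval_nonneg hp hτ

lemma eval_one_add_two_mul_firedSum (τ : ℝ) (w : List S) :
    (1 + 2 * firedSum b u₀ w).eval τ =
      1 + 2 * firedSum (fun i j => (b i j).eval τ) (fun j => (u₀ j).eval τ) w := by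
  rw [eval_add, eval_mul, eval_one, eval_ofNat]
  exact congrArg (1 + 2 * ·) (firedSum_map (evalRingHom τ) b u₀ w).symm

variable [Finite S]

lemma exists_abs_apply_le (b : S → S → ℝ) : ∃ c, 0 ≤ c ∧ ∀ i j, |b i j| ≤ c := by
  obtain ⟨c, hc⟩ := Finite.exists_le fun ij : S × S => |b ij.1 ij.2|
  exact ⟨max c 0, le_max_right _ _, fun i j => (hc (i, j)).trans (le_max_left _ _)⟩

lemma exists_pos_bounds {u : S → ℝ} (hu : ∀ j, 0 < u j) :
    ∃ r r', 0 < r ∧ 0 ≤ r' ∧ (∀ j, r ≤ u j) ∧ ∀ j, u j ≤ r' := by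
  obtain ⟨c, hc⟩ := Finite.exists_le fun j => (u j)⁻¹
  obtain ⟨c', hc'⟩ := Finite.exists_le u
  refine ⟨(max c 1)⁻¹, max c' 0, by positivity, le_max_right _ _, fun j => ?_,
    fun j => (hc' j).trans (le_max_left _ _)⟩
  exact inv_le_of_inv_le₀ (hu j) ((hc j).trans (le_max_left _ _))

theorem eventually_exists_length_le (hb : IsExpanding Γ nonnegPolynomials m b)
    (hu₀ : ∀ j, u₀ j ∈ nonnegPolynomials) (hu₀' : ∀ j, 0 < (u₀ j).coeff 0)
    (hm : Tendsto (fun τ => m.eval τ) atTop atTop) :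
    ∀ᶠ τ in atTop, ∀ Q : ℝ, ∃ n₀ : ℕ, ∀ w, IsGraphReduced Γ w →
      (1 + 2 * firedSum b u₀ w).derivative.eval τ ≤ Q * (1 + 2 * firedSum b u₀ w).eval τ →
        w.length ≤ n₀ := by
  classical
  have := Fintype.ofFinite S
  have hu_pos {τ : ℝ} (hτ : 0 ≤ τ) (j : S) : 0 < (u₀ j).eval τ :=
    (hu₀' j).trans_le (coeff_zero_le_eval (hu₀ j) hτ)
  obtain ⟨c₁, hc₁, hbc₁⟩ := exists_abs_apply_le fun i j => (b i j).eval 1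
  obtain ⟨-, r₁, -, hr₁, -, hu₁r₁⟩ := exists_pos_bounds (hu_pos zero_le_one)
  filter_upwards [hm.eventually_ge_atTop (2 * (2 + 2 * c₁) ^ Fintype.card S),
    eventually_ge_atTop 1] with τ hmτ hτ Q
  have hτ₀ : 0 ≤ τ := zero_le_one.trans hτ
  obtain ⟨c, hc, hbc⟩ := exists_abs_apply_le fun i j => (b i j).eval τ
  obtain ⟨r, r', hr, hr', hu₀r, hu₀r'⟩ := exists_pos_bounds (hu_pos hτ₀)
  obtain ⟨n, hn⟩ := exists_nat_gt (max (2 * τ * Q) 0)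
  obtain ⟨n₀, hn₀⟩ := exists_length_le_of_firedSum_le (hb.eval hτ₀) hr hu₀r hu₀r' hr' hc hbc
    (hb.eval zero_le_one) (fun j => (hu_pos zero_le_one j).le) hu₁r₁ hr₁ hc₁ hbc₁ hmτ
    (Q := 2 * τ ^ n) (by positivity)
  refine ⟨n₀, fun w hw hQ => hn₀ w hw ?_⟩
  rw [← eval_one_add_two_mul_firedSum, ← eval_one_add_two_mul_firedSum]
  refine eval_le_of_eval_derivative_le ?_ hτ ((le_max_left _ _).trans_lt hn)
    (by exact_mod_cast (le_max_right _ _).trans_lt hn) hQ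
  exact add_mem (one_mem _) (mul_mem (ofNat_mem _ 2) (hb.firedSum_mem hu₀ hw))

end PolynomialNumbersGame

/-! ### Reflections and the numbers game -/

section Reflections

open Matrix

variable {ι R : Type*} [Fintype ι] [DecidableEq ι] [CommRing R] {J : Matrix ι ι R}

/-- The matrix of the reflection `x ↦ x - 2⟨a,x⟩a` in a unit vector `a` for the bilinear form
with Gram matrix `J`. -/
def reflectionMatrix (J : Matrix ι ι R) (a : ι → R) : Matrix ι ι R :=
  1 - 2 • vecMulVec a (a ᵥ* J)

lemma reflectionMatrix_mulVec (a x : ι → R) :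
    reflectionMatrix J a *ᵥ x = x - (2 * (a ⬝ᵥ J *ᵥ x)) • a := by
  rw [reflectionMatrix, sub_mulVec, one_mulVec, smul_mulVec, vecMulVec_mulVec, op_smul_eq_smul,
    ← dotProduct_mulVec, ← smul_assoc, nsmul_eq_mul, Nat.cast_ofNat]

lemma reflectionMatrix_mul_self {a : ι → R} (ha : a ⬝ᵥ J *ᵥ a = 1) :
    reflectionMatrix J a * reflectionMatrix J a = 1 := by
  refine ext_of_mulVec_single fun i => ?_
  simp only [← mulVec_mulVec, reflectionMatrix_mulVec, one_mulVec, mulVec_sub, mulVec_smul, ha]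
  module

lemma commute_reflectionMatrix {a b : ι → R} (hab : a ⬝ᵥ J *ᵥ b = 0) (hba : b ⬝ᵥ J *ᵥ a = 0) :
    Commute (reflectionMatrix J a) (reflectionMatrix J b) := by
  refine ext_of_mulVec_single fun i => ?_
  simp only [← mulVec_mulVec, reflectionMatrix_mulVec, mulVec_sub, mulVec_smul, hab, hba]
  module

lemma reflectionMatrix_transpose_mul (hJ : J.IsSymm) {a : ι → R} :
    (reflectionMatrix J a)ᵀ * J = J * reflectionMatrix J a := by
  rw [reflectionMatrix, transpose_sub, transpose_one, transpose_smul, transpose_vecMulVec, sub_mul,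
    mul_sub, one_mul, mul_one, smul_mul, Matrix.mul_smul, vecMulVec_mul, mul_vecMulVec,
    ← vecMul_transpose, hJ.eq]

variable {S : Type*} [DecidableEq S] {Γ : SimpleGraph S} [DecidableRel Γ.Adj] {W : Type*}
  [Group W] (cs : CoxeterSystem (rightAngledCoxeterMatrix Γ) W)

/-- The weights of the numbers game associated with the reflections in the vectors `a i`. -/
def gramWeight (J : Matrix ι ι R) (a : S → ι → R) : S → S → R := fun i j => -(a i ⬝ᵥ J *ᵥ a j)

/-- The representation of a right-angled Coxeter group in which the generator `i` acts as the
reflection in the vector `a i`. -/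
def reflectionRep {a : S → ι → R} (ha : ∀ i, a i ⬝ᵥ J *ᵥ a i = 1)
    (hadj : ∀ i j, Γ.Adj i j → a i ⬝ᵥ J *ᵥ a j = 0) : W →* Matrix ι ι R :=
  cs.lift ⟨fun i => reflectionMatrix J (a i), isLiftable_rightAngledCoxeterMatrix
    (fun i => reflectionMatrix_mul_self (ha i))
    fun i j hij => commute_reflectionMatrix (hadj i j hij) (hadj j i hij.symm)⟩

variable {a : S → ι → R} (ha : ∀ i, a i ⬝ᵥ J *ᵥ a i = 1)
  (hadj : ∀ i j, Γ.Adj i j → a i ⬝ᵥ J *ᵥ a j = 0)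

lemma reflectionRep_simple (i : S) :
    reflectionRep cs ha hadj (cs.simple i) = reflectionMatrix J (a i) :=
  cs.lift_apply_simple _ i

lemma reflectionRep_transpose_mul_mul (hJ : J.IsSymm) (w : W) :
    (reflectionRep cs ha hadj w)ᵀ * J * reflectionRep cs ha hadj w = J := by
  induction w using cs.simple_induction_left with
  | one => rw [map_one, transpose_one, one_mul, mul_one]
  | mul_simple_left w i ih =>
    rw [map_mul, transpose_mul, reflectionRep_simple, mul_assoc _ _ J,
      reflectionMatrix_transpose_mul hJ, mul_assoc, mul_assoc,
      ← mul_assoc (reflectionMatrix J (a i)), reflectionMatrix_mul_self (ha i), one_mul,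
      ← mul_assoc, ih]

lemma gramWeight_play (x : ι → R) (ω : List S) (j : S) :
    play (gramWeight J a) (fun j => -(a j ⬝ᵥ J *ᵥ x)) ω j =
      -(a j ⬝ᵥ J *ᵥ reflectionRep cs ha hadj (cs.wordProd ω) *ᵥ x) := by
  induction ω generalizing j with
  | nil => rw [cs.wordProd_nil, map_one, one_mulVec]; rfl
  | cons i ω ih =>
    rw [play, fire, ih, ih, cs.wordProd_cons, map_mul, reflectionRep_simple, ← mulVec_mulVec,
      reflectionMatrix_mulVec, mulVec_sub, mulVec_smul, dotProduct_sub, dotProduct_smul, gramWeight,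
      smul_eq_mul]
    ring

lemma reflectionRep_wordProd_cons_mulVec (x : ι → R) (i : S) (ω : List S) :
    reflectionRep cs ha hadj (cs.wordProd (i :: ω)) *ᵥ x =
      reflectionRep cs ha hadj (cs.wordProd ω) *ᵥ x +
        (2 * play (gramWeight J a) (fun j => -(a j ⬝ᵥ J *ᵥ x)) ω i) • a i := by
  rw [gramWeight_play cs ha hadj, cs.wordProd_cons, map_mul, reflectionRep_simple, ← mulVec_mulVec,
    reflectionMatrix_mulVec]
  module

lemma reflectionRep_mulVec_apply {o : ι} (ho : ∀ i, a i o = 1) (x : ι → R) (ω : List S) :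
    (reflectionRep cs ha hadj (cs.wordProd ω) *ᵥ x) o =
      x o + 2 * firedSum (gramWeight J a) (fun j => -(a j ⬝ᵥ J *ᵥ x)) ω := by
  induction ω with
  | nil => rw [cs.wordProd_nil, map_one, one_mulVec, firedSum, mul_zero, add_zero]
  | cons i ω ih =>
    rw [reflectionRep_wordProd_cons_mulVec, Pi.add_apply, ih, Pi.smul_apply, ho, firedSum,
      smul_eq_mul]
    ring

end Reflections

section StretchingReflections

open Matrix Polynomial Filter

/-- A polynomial family of isometric representations of the form `diagonal d` which, at the
parameter `τ`, stretches the timelike basis vector `o`: there the `(o, o)` entry dominates its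
column, and its logarithmic derivative tends to infinity in the group. -/
structure IsStretching {G ι : Type*} [Group G] [Fintype ι] [DecidableEq ι]
    (ρ : G →* Matrix ι ι ℝ[X]) (d : ι → ℝ[X]) (o : ι) (τ : ℝ) : Prop where
  transpose_mul_mul : ∀ g, (ρ g)ᵀ * diagonal d * ρ g = diagonal d
  eval_ne_zero : (d o).eval τ ≠ 0
  abs_eval_le : ∀ g k, |(ρ g k o).eval τ| ≤ (ρ g o o).eval τ
  one_lt_eval : ∀ g ≠ 1, 1 < (ρ g o o).eval τ
  finite_derivative_le : ∀ Q : ℝ,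
    {g | (ρ g o o).derivative.eval τ ≤ Q * (ρ g o o).eval τ}.Finite

lemma IsStretching.comp {G H ι : Type*} [Group G] [Group H] [Fintype ι] [DecidableEq ι]
    {ρ : G →* Matrix ι ι ℝ[X]} {d : ι → ℝ[X]} {o : ι} {τ : ℝ} (hρ : IsStretching ρ d o τ)
    {f : H →* G} (hf : Function.Injective f) : IsStretching (ρ.comp f) d o τ where
  transpose_mul_mul h := hρ.transpose_mul_mul (f h)
  eval_ne_zero := hρ.eval_ne_zero
  abs_eval_le h := hρ.abs_eval_le (f h)
  one_lt_eval h hh := hρ.one_lt_eval (f h) ((map_ne_one_iff f hf).mpr hh)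
  finite_derivative_le Q := (hρ.finite_derivative_le Q).preimage hf.injOn

variable {S : Type*} {Γ : SimpleGraph S} {m : ℝ[X]} {τ : ℝ}

lemma IsExpanding.eval_firedSum_pos {b : S → S → ℝ[X]} {u₀ : S → ℝ[X]}
    (hb : IsExpanding Γ nonnegPolynomials m b) (hu₀ : ∀ j, u₀ j ∈ nonnegPolynomials)
    (hτ : 0 ≤ τ) (hu₀τ : ∀ j, 0 < (u₀ j).eval τ) {w : List S} (hw : IsGraphReduced Γ w)
    (hne : w ≠ []) : 0 < (firedSum b u₀ w).eval τ := by
  induction w with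
  | nil => exact absurd rfl hne
  | cons i w ih =>
    rw [firedSum, eval_add]
    rcases eq_or_ne w [] with rfl | hne'
    · rw [firedSum, eval_zero, zero_add]
      exact hu₀τ i
    · exact add_pos_of_pos_of_nonneg (ih hw.2 hne')
        (eval_nonneg ((hb.isDominant_play hu₀ hw.2).nonneg i hw.1) hτ)

variable {ι : Type*} [Fintype ι] [DecidableEq ι] {d : ι → ℝ[X]} {o : ι} {a : S → ι → ℝ[X]}

lemma neg_dotProduct_diagonal_mulVec_single (ho : ∀ i, a i o = 1) (j : S) :
    -(a j ⬝ᵥ diagonal d *ᵥ Pi.single o 1) = -d o := by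
  rw [diagonal_mulVec_single, dotProduct_single, ho, one_mul, mul_one]

variable [DecidableEq S] [DecidableRel Γ.Adj] {W : Type*} [Group W]
  (cs : CoxeterSystem (rightAngledCoxeterMatrix Γ) W)
  (ha : ∀ i, a i ⬝ᵥ diagonal d *ᵥ a i = 1)
  (hadj : ∀ i j, Γ.Adj i j → a i ⬝ᵥ diagonal d *ᵥ a j = 0) (ho : ∀ i, a i o = 1)

include ho in
lemma reflectionRep_apply_self (ω : List S) :
    reflectionRep cs ha hadj (cs.wordProd ω) o o =
      1 + 2 * firedSum (gramWeight (diagonal d) a) (fun _ => -d o) ω := by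
  have h := reflectionRep_mulVec_apply cs ha hadj ho (Pi.single o 1) ω
  simp only [neg_dotProduct_diagonal_mulVec_single ho] at h
  rwa [mulVec_single_one, col_apply, Pi.single_eq_same] at h

variable (hb : IsExpanding Γ nonnegPolynomials m (gramWeight (diagonal d) a))
  (hdo : -d o ∈ nonnegPolynomials)

include ho hb hdo in
lemma abs_eval_reflectionRep_le (hτ : 0 ≤ τ) (hle : ∀ i k, |(a i k).eval τ| ≤ 1) {ω : List S}
    (hω : IsGraphReduced Γ ω) (k : ι) :
    |(reflectionRep cs ha hadj (cs.wordProd ω) k o).eval τ| ≤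
      (reflectionRep cs ha hadj (cs.wordProd ω) o o).eval τ := by
  induction ω with
  | nil =>
    rw [cs.wordProd_nil, map_one, one_apply, one_apply_eq]
    split_ifs <;> simp
  | cons i ω ih =>
    have hfired : 0 ≤ (play (gramWeight (diagonal d) a) (fun _ => -d o) ω i).eval τ :=
      eval_nonneg ((hb.isDominant_play (fun _ => hdo) hω.2).nonneg i hω.1) hτ
    have hentry (k : ι) := congrFun
      (reflectionRep_wordProd_cons_mulVec cs ha hadj (Pi.single o 1) i ω) k
    simp only [neg_dotProduct_diagonal_mulVec_single ho] at hentry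
    simp only [mulVec_single_one, col_apply, Pi.add_apply, Pi.smul_apply, smul_eq_mul] at hentry
    rw [hentry, hentry, ho, mul_one, eval_add, eval_add, eval_mul, eval_mul, eval_ofNat]
    refine (abs_add_le _ _).trans (add_le_add (ih hω.2) ?_)
    have hnonneg := mul_nonneg zero_le_two hfired
    rw [abs_mul, abs_of_nonneg hnonneg]
    exact mul_le_of_le_one_right hnonneg (hle i k)

include ho hb hdo in
theorem eventually_isStretching_reflectionRep [Finite S] (hle : ∀ i k τ, |(a i k).eval τ| ≤ 1)
    (hdo' : 0 < (-d o).coeff 0) (hm : Tendsto (fun τ => m.eval τ) atTop atTop) :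
    ∀ᶠ τ in atTop, IsStretching (reflectionRep cs ha hadj) d o τ := by
  filter_upwards [eventually_exists_length_le hb (fun _ => hdo) (fun _ => hdo') hm,
    eventually_ge_atTop 0] with τ hlength hτ
  have hdτ : 0 < (-d o).eval τ := hdo'.trans_le (coeff_zero_le_eval hdo hτ)
  have hreduced (w : W) : ∃ ω, IsGraphReduced Γ ω ∧ w = cs.wordProd ω :=
    (cs.exists_isReduced w).imp fun _ hω => ⟨isGraphReduced_of_isReduced hω.1, hω.2⟩
  refine ⟨reflectionRep_transpose_mul_mul cs ha hadj (isSymm_diagonal d), ?_, fun w k => ?_,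
    fun w hw => ?_, fun Q => ?_⟩
  · rw [eval_neg] at hdτ
    exact (neg_pos.mp hdτ).ne
  · obtain ⟨ω, hω, rfl⟩ := hreduced w
    exact abs_eval_reflectionRep_le cs ha hadj ho hb hdo hτ (fun i k => hle i k τ) hω k
  · obtain ⟨ω, hω, rfl⟩ := hreduced w
    have hne : ω ≠ [] := by
      rintro rfl
      exact hw cs.wordProd_nil
    have hpos := hb.eval_firedSum_pos (fun _ => hdo) hτ (fun _ => hdτ) hω hne
    rw [reflectionRep_apply_self cs ha hadj ho, eval_add, eval_mul, eval_ofNat, eval_one]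
    linarith
  · obtain ⟨n₀, hn₀⟩ := hlength Q
    refine ((List.finite_length_le S n₀).image cs.wordProd).subset fun w hw => ?_
    obtain ⟨ω, hω, rfl⟩ := hreduced w
    rw [Set.mem_ofPred_eq, reflectionRep_apply_self cs ha hadj ho] at hw
    exact ⟨ω, hn₀ ω hω hw, rfl⟩

end StretchingReflections

/-! ### Affine actions from deformations of orthogonal representations -/

section AffineAction

open Matrix Polynomial LieAlgebra.Orthogonal

variable {ι : Type*}

/-- The velocity at `τ` of a family of matrices depending polynomially on a parameter. -/
noncomputable def velocity (τ : ℝ) (M : Matrix ι ι ℝ[X]) : Matrix ι ι ℝ :=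
  M.map fun p => p.derivative.eval τ

lemma velocity_transpose (τ : ℝ) (M : Matrix ι ι ℝ[X]) : velocity τ Mᵀ = (velocity τ M)ᵀ := rfl

variable [Fintype ι] [DecidableEq ι]

/-- The value at `τ` of a family of matrices depending polynomially on a parameter. -/
noncomputable def evalMatrix (τ : ℝ) : Matrix ι ι ℝ[X] →+* Matrix ι ι ℝ :=
  (evalRingHom τ).mapMatrix

lemma evalMatrix_transpose (τ : ℝ) (M : Matrix ι ι ℝ[X]) :
    evalMatrix τ Mᵀ = (evalMatrix τ M)ᵀ := rfl

lemma velocity_mul (τ : ℝ) (M N : Matrix ι ι ℝ[X]) :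
    velocity τ (M * N) = velocity τ M * evalMatrix τ N + evalMatrix τ M * velocity τ N := by
  ext i j
  simp only [velocity, evalMatrix, RingHom.mapMatrix_apply, map_apply, mul_apply, Matrix.add_apply,
    derivative_sum, derivative_mul, eval_finsetSum, eval_add, eval_mul, coe_evalRingHom,
    Finset.sum_add_distrib]

/-- The action `Z ↦ Bᵀ Z B` of a matrix on the skew-symmetric forms. -/
def skewConj (B : Matrix ι ι ℝ) : so ι ℝ →ₗ[ℝ] so ι ℝ where
  toFun Z := ⟨Bᵀ * Z * B, by
    rw [mem_so, transpose_mul, transpose_mul, transpose_transpose, (mem_so _ _ _).mp Z.2,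
      Matrix.neg_mul, Matrix.mul_neg, mul_assoc]⟩
  map_add' Y Z := Subtype.ext <| by simp [mul_add, add_mul]
  map_smul' c Z := Subtype.ext <| by simp

/-- The projection of the bilinear forms onto the skew-symmetric ones. -/
noncomputable def skewPart : Matrix ι ι ℝ →ₗ[ℝ] so ι ℝ where
  toFun M := ⟨(2⁻¹ : ℝ) • (M - Mᵀ), by
    rw [mem_so, transpose_smul, transpose_sub, transpose_transpose, ← smul_neg, neg_sub]⟩
  map_add' M N := Subtype.ext <| by simp; module
  map_smul' c M := Subtype.ext <| by simp; module

lemma skewConj_one : skewConj (1 : Matrix ι ι ℝ) = LinearMap.id :=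
  LinearMap.ext fun Z => Subtype.ext <| by simp [skewConj]

lemma skewConj_mul (A B : Matrix ι ι ℝ) : skewConj (A * B) = skewConj B ∘ₗ skewConj A :=
  LinearMap.ext fun Z => Subtype.ext <| by simp [skewConj, mul_assoc]

lemma skewConj_skewPart (B M : Matrix ι ι ℝ) :
    skewConj B (skewPart M) = skewPart (Bᵀ * M * B) :=
  Subtype.ext <| by simp [skewConj, skewPart, mul_assoc, mul_sub, sub_mul]

variable {G : Type*} [Group G] {ρ : G →* Matrix ι ι ℝ[X]} {J : Matrix ι ι ℝ[X]} {τ : ℝ}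

lemma evalMatrix_inv_mul (g : G) : evalMatrix τ (ρ g⁻¹) * evalMatrix τ (ρ g) = 1 := by
  rw [← map_mul, ← map_mul, inv_mul_cancel, map_one, map_one]

lemma mul_eq_transpose_inv_mul (hρ : ∀ g, (ρ g)ᵀ * J * ρ g = J) (g : G) :
    J * ρ g = (ρ g⁻¹)ᵀ * J := by
  conv_lhs => rw [← hρ g⁻¹, mul_assoc, ← map_mul, inv_mul_cancel, map_one, mul_one]

lemma evalMatrix_mul_eq (hρ : ∀ g, (ρ g)ᵀ * J * ρ g = J) (g : G) :
    evalMatrix τ J * evalMatrix τ (ρ g) = (evalMatrix τ (ρ g⁻¹))ᵀ * evalMatrix τ J := by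
  rw [← map_mul, mul_eq_transpose_inv_mul hρ, map_mul, evalMatrix_transpose]

variable (ρ J τ) in
/-- The infinitesimal deformation of the representation at the parameter `τ`, as a cocycle with
values in the skew-symmetric forms: `J ρ'(g) ρ(g)⁻¹` would be skew-symmetric if the form `J` did
not depend on the parameter. -/
noncomputable def deformationCocycle (g : G) : so ι ℝ :=
  skewPart (evalMatrix τ J * velocity τ (ρ g) * evalMatrix τ (ρ g⁻¹))

lemma deformationCocycle_mul (hρ : ∀ g, (ρ g)ᵀ * J * ρ g = J) (g h : G) :
    deformationCocycle ρ J τ (g * h) =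
      skewConj (evalMatrix τ (ρ g⁻¹)) (deformationCocycle ρ J τ h) +
        deformationCocycle ρ J τ g := by
  rw [deformationCocycle, deformationCocycle, deformationCocycle, skewConj_skewPart, ← map_add]
  congr 1
  have hh : evalMatrix τ (ρ h) * evalMatrix τ (ρ h⁻¹) = 1 := by
    rw [← map_mul, ← map_mul, mul_inv_cancel, map_one, map_one]
  calc evalMatrix τ J * velocity τ (ρ (g * h)) * evalMatrix τ (ρ (g * h)⁻¹)
      = evalMatrix τ J * velocity τ (ρ g) *
            (evalMatrix τ (ρ h) * evalMatrix τ (ρ h⁻¹)) * evalMatrix τ (ρ g⁻¹) +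
          evalMatrix τ J * evalMatrix τ (ρ g) * velocity τ (ρ h) * evalMatrix τ (ρ h⁻¹) *
            evalMatrix τ (ρ g⁻¹) := by
        rw [_root_.mul_inv_rev, map_mul, map_mul, map_mul, velocity_mul]
        noncomm_ring
    _ = _ := by
        rw [hh, mul_one, evalMatrix_mul_eq hρ, add_comm]
        simp only [mul_assoc]

lemma deformationCocycle_one (hρ : ∀ g, (ρ g)ᵀ * J * ρ g = J) :
    deformationCocycle ρ J τ 1 = 0 := by
  have h := deformationCocycle_mul (τ := τ) hρ 1 1
  rw [one_mul, inv_one, map_one, map_one, skewConj_one] at h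
  exact right_eq_add.mp h

/-- The affine action on the skew-symmetric forms whose linear part is induced by the representation
and whose translation part is its infinitesimal deformation. -/
noncomputable def deformationAction (hρ : ∀ g, (ρ g)ᵀ * J * ρ g = J) (τ : ℝ) :
    G →* (so ι ℝ ≃ᵃ[ℝ] so ι ℝ) :=
  AffineEquiv.equivUnitsAffineMap.symm.toMonoidHom.comp <| MonoidHom.toHomUnits
    { toFun g := (skewConj (evalMatrix τ (ρ g⁻¹))).toAffineMap +
        AffineMap.const ℝ _ (deformationCocycle ρ J τ g)
      map_one' := by
        ext1 Z
        simp [deformationCocycle_one hρ, skewConj_one]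
      map_mul' g h := by
        ext1 Z
        simp [deformationCocycle_mul hρ, skewConj_mul, add_assoc] }

lemma deformationAction_apply (hρ : ∀ g, (ρ g)ᵀ * J * ρ g = J) (g : G) (Z : so ι ℝ) :
    deformationAction hρ τ g Z =
      skewConj (evalMatrix τ (ρ g⁻¹)) Z + deformationCocycle ρ J τ g := rfl

lemma coe_deformationAction_apply (hρ : ∀ g, (ρ g)ᵀ * J * ρ g = J) (g : G) (Z : so ι ℝ) :
    (deformationAction hρ τ g Z : Matrix ι ι ℝ) =
      (evalMatrix τ (ρ g⁻¹))ᵀ * Z * evalMatrix τ (ρ g⁻¹) +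
        (2⁻¹ : ℝ) • (evalMatrix τ J * velocity τ (ρ g) * evalMatrix τ (ρ g⁻¹) -
          (evalMatrix τ J * velocity τ (ρ g) * evalMatrix τ (ρ g⁻¹))ᵀ) := rfl

lemma transpose_mul_evalMatrix (hJ : J.IsSymm) (hρ : ∀ g, (ρ g)ᵀ * J * ρ g = J) (g : G) :
    (evalMatrix τ J * velocity τ (ρ g) * evalMatrix τ (ρ g⁻¹))ᵀ * evalMatrix τ (ρ g) =
      (evalMatrix τ (ρ g⁻¹))ᵀ * velocity τ J - velocity τ J * evalMatrix τ (ρ g) -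
        evalMatrix τ J * velocity τ (ρ g) := by
  have hderiv : velocity τ ((ρ g)ᵀ * J * ρ g) = velocity τ J := by rw [hρ]
  have hinv : (evalMatrix τ (ρ g⁻¹))ᵀ * (evalMatrix τ (ρ g))ᵀ = 1 := by
    rw [← transpose_mul, ← map_mul, ← map_mul, mul_inv_cancel, map_one, map_one, transpose_one]
  rw [velocity_mul, velocity_mul, map_mul, velocity_transpose, evalMatrix_transpose] at hderiv
  have h := congrArg ((evalMatrix τ (ρ g⁻¹))ᵀ * ·) hderiv
  simp only [mul_add, add_mul, ← mul_assoc, hinv, one_mul] at h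
  rw [transpose_mul, transpose_mul, ← evalMatrix_transpose τ J, hJ.eq, ← h, ← mul_assoc]
  abel

-- The polarization of the derivative of `(ρ g)ᵀ J (ρ g) = J`: the velocity is recovered from a
-- point of the affine action and its image.
lemma evalMatrix_mul_velocity (hJ : J.IsSymm) (hρ : ∀ g, (ρ g)ᵀ * J * ρ g = J) (g : G)
    (Z : so ι ℝ) :
    evalMatrix τ J * velocity τ (ρ g) =
      (deformationAction hρ τ g Z - (2⁻¹ : ℝ) • velocity τ J : Matrix ι ι ℝ) * evalMatrix τ (ρ g) -
        (evalMatrix τ (ρ g⁻¹))ᵀ * (Z - (2⁻¹ : ℝ) • velocity τ J) := by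
  rw [coe_deformationAction_apply, sub_mul, add_mul, mul_assoc _ _ (evalMatrix τ (ρ g)),
    evalMatrix_inv_mul, mul_one, smul_mul, sub_mul, transpose_mul_evalMatrix hJ hρ,
    mul_assoc _ _ (evalMatrix τ (ρ g)), evalMatrix_inv_mul, mul_one, mul_sub, Matrix.mul_smul,
    smul_mul]
  module

lemma transpose_inv_mul_eq_mul (hρ : ∀ g, (ρ g)ᵀ * J * ρ g = J) {g : G}
    (hg : deformationAction hρ τ g = 1) (Z : so ι ℝ) :
    (evalMatrix τ (ρ g⁻¹))ᵀ * Z = Z * evalMatrix τ (ρ g) := by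
  have hfix (Y : so ι ℝ) :
      skewConj (evalMatrix τ (ρ g⁻¹)) Y + deformationCocycle ρ J τ g = Y := by
    rw [← deformationAction_apply hρ, hg]
    rfl
  have hcocycle := hfix 0
  rw [map_zero, zero_add] at hcocycle
  have hlinear : skewConj (evalMatrix τ (ρ g⁻¹)) Z = Z := by
    simpa only [hcocycle, add_zero] using hfix Z
  have hmatrix : (evalMatrix τ (ρ g⁻¹))ᵀ * Z * evalMatrix τ (ρ g⁻¹) = (Z : Matrix ι ι ℝ) :=
    congrArg Subtype.val hlinear
  conv_rhs => rw [← hmatrix, mul_assoc, evalMatrix_inv_mul, mul_one]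

namespace IsStretching

variable {d : ι → ℝ[X]} {o : ι} (hρ : IsStretching ρ d o τ)
include hρ

lemma eval_apply_self_inv (g : G) : (ρ g⁻¹ o o).eval τ = (ρ g o o).eval τ := by
  have h := congrArg (eval τ) (congrFun₂ (mul_eq_transpose_inv_mul hρ.transpose_mul_mul g) o o)
  rw [diagonal_mul, mul_diagonal, transpose_apply, eval_mul, eval_mul, mul_comm] at h
  exact (mul_right_cancel₀ hρ.eval_ne_zero h).symm

lemma abs_mul_evalMatrix_apply_le (g : G) (M : Matrix ι ι ℝ) {C : ℝ} (hM : ∀ k, |M o k| ≤ C) :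
    |(M * evalMatrix τ (ρ g)) o o| ≤ Fintype.card ι * C * (ρ g o o).eval τ := by
  rw [mul_apply]
  calc |∑ k, M o k * (ρ g k o).eval τ| ≤ ∑ k, |M o k * (ρ g k o).eval τ| :=
        Finset.abs_sum_le_sum_abs _ _
    _ ≤ ∑ _k : ι, C * (ρ g o o).eval τ := Finset.sum_le_sum fun k _ => by
        rw [abs_mul]
        exact mul_le_mul (hM k) (hρ.abs_eval_le g k) (abs_nonneg _) ((abs_nonneg _).trans (hM k))
    _ = Fintype.card ι * C * (ρ g o o).eval τ := by
        rw [Finset.sum_const, Finset.card_univ, nsmul_eq_mul, mul_assoc]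

lemma exists_abs_derivative_le (C : ℝ) :
    ∃ Q : ℝ, ∀ g, ∀ Z : so ι ℝ, (∀ i j, |(Z : Matrix ι ι ℝ) i j| ≤ C) →
      (∀ i j, |(deformationAction hρ.transpose_mul_mul τ g Z : Matrix ι ι ℝ) i j| ≤ C) →
        |(ρ g o o).derivative.eval τ| ≤ Q * (ρ g o o).eval τ := by
  obtain ⟨c, -, hc⟩ := exists_abs_apply_le (velocity τ (diagonal d))
  have hbound (Y : Matrix ι ι ℝ) (hY : ∀ i j, |Y i j| ≤ C) (i j : ι) :
      |(Y - (2⁻¹ : ℝ) • velocity τ (diagonal d)) i j| ≤ C + c := by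
    refine (abs_sub _ _).trans (add_le_add (hY i j) ?_)
    rw [Matrix.smul_apply, smul_eq_mul, abs_mul, abs_of_pos (by norm_num)]
    linarith [hc i j, abs_nonneg (velocity τ (diagonal d) i j)]
  refine ⟨2 * (Fintype.card ι * (C + c)) / |(d o).eval τ|, fun g Z hZ hgZ => ?_⟩
  have hentry := congrArg (· o o)
    (evalMatrix_mul_velocity (τ := τ) (isSymm_diagonal d) hρ.transpose_mul_mul g Z)
  have himage := hρ.abs_mul_evalMatrix_apply_le g _ (hbound _ hgZ o)
  have hsource := hρ.abs_mul_evalMatrix_apply_le g⁻¹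
    (Z - (2⁻¹ : ℝ) • velocity τ (diagonal d) : Matrix ι ι ℝ)ᵀ fun k => hbound _ hZ k o
  rw [hρ.eval_apply_self_inv, ← transpose_apply (_ * _), transpose_mul, transpose_transpose]
    at hsource
  have hleft : (evalMatrix τ (diagonal d) * velocity τ (ρ g)) o o =
      (d o).eval τ * (ρ g o o).derivative.eval τ := by
    rw [evalMatrix, RingHom.mapMatrix_apply, diagonal_map (map_zero _), diagonal_mul]
    rfl
  rw [div_mul_eq_mul_div, le_div_iff₀ (abs_pos.mpr hρ.eval_ne_zero), mul_comm, ← abs_mul, ← hleft,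
    hentry, Matrix.sub_apply]
  refine (abs_sub _ _).trans ((add_le_add himage hsource).trans_eq (by ring))

theorem finite_deformationAction_entries_le (C : ℝ) :
    {g | ∃ Z : so ι ℝ, (∀ i j, |(Z : Matrix ι ι ℝ) i j| ≤ C) ∧
      ∀ i j, |(deformationAction hρ.transpose_mul_mul τ g Z : Matrix ι ι ℝ) i j| ≤ C}.Finite := by
  obtain ⟨Q, hQ⟩ := hρ.exists_abs_derivative_le C
  exact (hρ.finite_derivative_le Q).subset fun g ⟨Z, hZ, hgZ⟩ =>
    (le_abs_self _).trans (hQ g Z hZ hgZ)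

-- Test the linear part on the elementary skew-symmetric form in two directions orthogonal to `o`.
lemma eval_apply_eq_zero {g : G} (hg : deformationAction hρ.transpose_mul_mul τ g = 1)
    {j k : ι} (hjo : j ≠ o) (hko : k ≠ o) (hjk : j ≠ k) : (ρ g k o).eval τ = 0 := by
  have hskew : single j k 1 - single k j 1 ∈ so ι ℝ := by
    rw [mem_so, transpose_sub, transpose_single, transpose_single, neg_sub]
  have hmul := transpose_inv_mul_eq_mul hρ.transpose_mul_mul hg ⟨_, hskew⟩
  have hentry := congrFun₂ hmul j o
  rw [mul_sub, sub_mul, Matrix.sub_apply, Matrix.sub_apply,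
    mul_single_apply_of_ne _ _ _ _ _ hko.symm, mul_single_apply_of_ne _ _ _ _ _ hjo.symm,
    single_mul_apply_same,
    single_mul_apply_of_ne _ _ _ _ _ hjk, one_mul, sub_zero, sub_zero] at hentry
  exact hentry.symm

theorem deformationAction_injective (hι : 3 ≤ Fintype.card ι) :
    Function.Injective (deformationAction hρ.transpose_mul_mul τ) := by
  refine (injective_iff_map_eq_one _).mpr fun g hg => by_contra fun hne => ?_
  have hcolumn (k : ι) (hk : k ≠ o) : (ρ g k o).eval τ = 0 := by
    obtain ⟨j, hj⟩ : ∃ j, j ∉ ({k, o} : Finset ι) := by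
      by_contra! h
      exact absurd (Finset.card_le_two (a := k) (b := o)) (by
        rw [Finset.eq_univ_of_forall h, Finset.card_univ]; omega)
    simp only [Finset.mem_insert, Finset.mem_singleton, not_or] at hj
    exact hρ.eval_apply_eq_zero hg hj.2 hk hj.1
  have hnorm := congrArg (eval τ) (congrFun₂ (hρ.transpose_mul_mul g) o o)
  rw [mul_apply, eval_finsetSum, Finset.sum_eq_single o (fun k _ hk => by
    rw [eval_mul, hcolumn k hk, mul_zero]) (fun h => absurd (Finset.mem_univ o) h),
    mul_diagonal, transpose_apply, diagonal_apply_eq, eval_mul, eval_mul] at hnorm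
  have hsq : (ρ g o o).eval τ * (ρ g o o).eval τ = 1 :=
    mul_right_cancel₀ hρ.eval_ne_zero (by linarith)
  nlinarith [hρ.one_lt_eval g hne]

end IsStretching

end AffineAction

/-! ### A polygon with right angles in anti-de Sitter space -/

section Polygon

open Matrix Polynomial Real

lemma val_sub_add_val {n : ℕ} (i j : Fin n) :
    ((i - j : Fin n) : ℕ) + j = i ∨ ((i - j : Fin n) : ℕ) + j = i + n := by
  rcases le_or_gt j i with h | h
  · exact .inl (by rw [Fin.coe_sub_iff_le.mpr h]; omega)
  · exact .inr (by rw [Fin.coe_sub_iff_lt.mpr h]; omega)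

/-- The direction of the normal to the `k`-th side of a regular Euclidean polygon with `2g + 2`
sides. -/
noncomputable def polygonAngle (g k : ℕ) : ℝ := π * k / (g + 1)

variable {g : ℕ} {i j : Fin (2 * g + 2)}

lemma cos_polygonAngle_val_sub (i j : Fin (2 * g + 2)) :
    cos (polygonAngle g (i - j : Fin (2 * g + 2))) = cos (polygonAngle g i - polygonAngle g j) := by
  rcases val_sub_add_val i j with h | h <;> have h' := congrArg (Nat.cast (R := ℝ)) h <;>
    push_cast at h'
  · congr 1
    rw [polygonAngle, polygonAngle, polygonAngle, ← h']
    ring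
  · rw [← cos_add_two_pi (polygonAngle g i - polygonAngle g j)]
    congr 1
    rw [polygonAngle, polygonAngle, polygonAngle, eq_sub_of_add_eq h']
    field_simp
    ring

lemma neg_one_pow_val_sub (i j : Fin (2 * g + 2)) :
    (-1 : ℝ) ^ ((i - j : Fin (2 * g + 2)) : ℕ) = (-1) ^ (i : ℕ) * (-1) ^ (j : ℕ) := by
  rw [← pow_add]
  refine neg_one_pow_congr ?_
  rw [Nat.even_iff, Nat.even_iff]
  rcases val_sub_add_val i j with h | h <;> omega

lemma cos_polygonAngle_sub_of_adj (hij : (SimpleGraph.cycleGraph (2 * g + 2)).Adj i j) :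
    cos (polygonAngle g i - polygonAngle g j) = cos (polygonAngle g 1) := by
  rcases SimpleGraph.cycleGraph_adj.mp hij with h | h
  · rw [← cos_polygonAngle_val_sub, h, Fin.val_one]
  · rw [← cos_neg, neg_sub, ← cos_polygonAngle_val_sub, h, Fin.val_one]

lemma neg_one_pow_mul_of_adj (hij : (SimpleGraph.cycleGraph (2 * g + 2)).Adj i j) :
    (-1 : ℝ) ^ (i : ℕ) * (-1) ^ (j : ℕ) = -1 := by
  rcases SimpleGraph.cycleGraph_adj.mp hij with h | h
  · rw [← neg_one_pow_val_sub, h, Fin.val_one, pow_one]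
  · rw [mul_comm, ← neg_one_pow_val_sub, h, Fin.val_one, pow_one]

lemma cos_le_cos_of_mem_Icc {x y : ℝ} (hx : 0 ≤ x) (hy : y ∈ Set.Icc x (2 * π - x)) :
    cos y ≤ cos x := by
  rcases le_total y π with h | h
  · exact cos_le_cos_of_nonneg_of_le_pi hx h hy.1
  · rw [← cos_two_pi_sub y]
    exact cos_le_cos_of_nonneg_of_le_pi hx (by linarith) (by linarith [hy.2])

lemma cos_polygonAngle_sub_le_of_not_adj (hne : i ≠ j)
    (hij : ¬(SimpleGraph.cycleGraph (2 * g + 2)).Adj i j) :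
    cos (polygonAngle g i - polygonAngle g j) ≤ cos (polygonAngle g 2) := by
  rw [← cos_polygonAngle_val_sub]
  set k := i - j with hk
  have hk₀ : k ≠ 0 := sub_ne_zero.mpr hne
  rw [SimpleGraph.cycleGraph_adj, not_or, ← neg_sub i j, ← hk] at hij
  have hk₁ : 2 ≤ (k : ℕ) := by
    refine (Nat.two_le_iff _).mpr ⟨Fin.val_ne_zero_iff.mpr hk₀, fun h => hij.1 (Fin.ext ?_)⟩
    rw [h, Fin.val_one]
  have hk₂ : (k : ℕ) ≤ 2 * g := by
    have hlast : (k : ℕ) ≠ 2 * g + 1 := fun h =>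
      hij.2 (neg_eq_iff_eq_neg.mpr (Fin.ext (h.trans (Fin.coe_neg_one).symm)))
    exact Nat.le_of_lt_succ (lt_of_le_of_ne (Nat.le_of_lt_succ k.isLt) hlast)
  have hk₁' : (2 : ℝ) ≤ k := by exact_mod_cast hk₁
  have hk₂' : (k : ℝ) ≤ 2 * g := by exact_mod_cast hk₂
  refine cos_le_cos_of_mem_Icc (by unfold polygonAngle; positivity) ⟨?_, ?_⟩
  · unfold polygonAngle
    push_cast
    gcongr
  · rw [polygonAngle, polygonAngle, le_sub_iff_add_le, ← add_div, div_le_iff₀ (by positivity)]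
    push_cast
    nlinarith [pi_pos]

lemma cos_polygonAngle_two_lt (hg : 1 ≤ g) :
    cos (polygonAngle g 2) < cos (polygonAngle g 1) := by
  have hg' : (1 : ℝ) ≤ g := by exact_mod_cast hg
  refine cos_lt_cos_of_nonneg_of_le_pi (by unfold polygonAngle; positivity) ?_ ?_
  · rw [polygonAngle, div_le_iff₀ (by positivity)]
    push_cast
    nlinarith [pi_pos]
  · unfold polygonAngle
    gcongr
    norm_num

/-- The size of the polygon as a polynomial in the deformation parameter. -/
noncomputable def polygonScale (g : ℕ) : ℝ[X] :=
  C (2 / (cos (polygonAngle g 1) - cos (polygonAngle g 2))) + X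

/-- The diagonal coefficients of a family of bilinear forms of signature `(2, 2)` for large
parameters, chosen so that the vectors `polygonNormal g i` are unit vectors and consecutive ones are
orthogonal. -/
noncomputable def polygonForm (g : ℕ) : Fin 4 → ℝ[X] :=
  ![polygonScale g, polygonScale g,
    C 2⁻¹ * (1 - C (1 - cos (polygonAngle g 1)) * polygonScale g),
    C 2⁻¹ * (1 - C (1 + cos (polygonAngle g 1)) * polygonScale g)]

/-- The normal vectors to the sides of the polygon. -/
noncomputable def polygonNormal (g : ℕ) (i : Fin (2 * g + 2)) : Fin 4 → ℝ[X] :=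
  ![C (cos (polygonAngle g i)), C (sin (polygonAngle g i)), C ((-1) ^ (i : ℕ)), 1]

lemma polygonNormal_dotProduct (i j : Fin (2 * g + 2)) :
    polygonNormal g i ⬝ᵥ diagonal (polygonForm g) *ᵥ polygonNormal g j =
      C (((-1) ^ (i : ℕ) * (-1) ^ (j : ℕ) + 1) / 2) +
        C (cos (polygonAngle g i - polygonAngle g j) - (1 + cos (polygonAngle g 1)) / 2 -
          (1 - cos (polygonAngle g 1)) / 2 * ((-1) ^ (i : ℕ) * (-1) ^ (j : ℕ))) *
          polygonScale g := by
  rw [cos_sub]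
  simp [dotProduct, mulVec_diagonal, Fin.sum_univ_four, polygonNormal, polygonForm, div_eq_mul_inv]
  ring

lemma polygonNormal_dotProduct_self (i : Fin (2 * g + 2)) :
    polygonNormal g i ⬝ᵥ diagonal (polygonForm g) *ᵥ polygonNormal g i = 1 := by
  rw [polygonNormal_dotProduct, ← pow_add, (Even.add_self (i : ℕ)).neg_one_pow, sub_self, cos_zero]
  refine Polynomial.funext fun t => ?_
  simp only [eval_add, eval_mul, eval_C, eval_one]
  ring

lemma polygonNormal_dotProduct_of_adj (hij : (SimpleGraph.cycleGraph (2 * g + 2)).Adj i j) :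
    polygonNormal g i ⬝ᵥ diagonal (polygonForm g) *ᵥ polygonNormal g j = 0 := by
  rw [polygonNormal_dotProduct, neg_one_pow_mul_of_adj hij, cos_polygonAngle_sub_of_adj hij]
  refine Polynomial.funext fun t => ?_
  simp only [eval_add, eval_mul, eval_C, eval_zero]
  ring

lemma abs_eval_polygonNormal_le (i : Fin (2 * g + 2)) (k : Fin 4) (t : ℝ) :
    |(polygonNormal g i k).eval t| ≤ 1 := by
  fin_cases k <;> simp [polygonNormal, abs_cos_le_one, abs_sin_le_one]

lemma two_le_mul_of_sub_le (hg : 1 ≤ g) {x : ℝ}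
    (hx : cos (polygonAngle g 1) - cos (polygonAngle g 2) ≤ x) :
    2 ≤ x * (2 / (cos (polygonAngle g 1) - cos (polygonAngle g 2))) := by
  rw [mul_div_assoc', le_div_iff₀ (sub_pos.mpr (cos_polygonAngle_two_lt hg)), mul_comm]
  exact mul_le_mul_of_nonneg_right hx zero_le_two

lemma neg_polygonForm_eq : -polygonForm g 3 =
    C (((1 + cos (polygonAngle g 1)) *
        (2 / (cos (polygonAngle g 1) - cos (polygonAngle g 2))) - 1) / 2) +
      C ((1 + cos (polygonAngle g 1)) / 2) * X := by
  refine Polynomial.funext fun t => ?_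
  simp [polygonForm, polygonScale]
  ring

lemma coeff_zero_neg_polygonForm_pos (hg : 1 ≤ g) : 0 < (-polygonForm g 3).coeff 0 := by
  have h := two_le_mul_of_sub_le hg (x := 1 + cos (polygonAngle g 1))
    (by linarith [neg_one_le_cos (polygonAngle g 2)])
  rw [neg_polygonForm_eq, coeff_add, coeff_C_zero, mul_coeff_zero, coeff_X_zero, mul_zero]
  linarith

lemma neg_polygonForm_mem (hg : 1 ≤ g) : -polygonForm g 3 ∈ nonnegPolynomials := by
  have h := coeff_zero_neg_polygonForm_pos hg
  rw [neg_polygonForm_eq, coeff_add, coeff_C_zero, mul_coeff_zero, coeff_X_zero, mul_zero,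
    add_zero] at h
  rw [neg_polygonForm_eq]
  exact add_mem (C_mem_nonnegPolynomials h.le) (mul_mem (C_mem_nonnegPolynomials
    (by linarith [neg_one_le_cos (polygonAngle g 1)])) X_mem_nonnegPolynomials)

/-- The lower bound `m` for the weights `b` of non-adjacent sides of the polygon, normalized so
that `m + 1 ≤ 2 * b`. -/
noncomputable def polygonGap (g : ℕ) : ℝ[X] :=
  1 + C (2 * (cos (polygonAngle g 1) - cos (polygonAngle g 2))) * X

lemma sub_le_of_not_adj (hne : i ≠ j) (hij : ¬(SimpleGraph.cycleGraph (2 * g + 2)).Adj i j) :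
    cos (polygonAngle g 1) - cos (polygonAngle g 2) ≤
      (1 + cos (polygonAngle g 1)) / 2 +
          (1 - cos (polygonAngle g 1)) / 2 * ((-1) ^ (i : ℕ) * (-1) ^ (j : ℕ)) -
        cos (polygonAngle g i - polygonAngle g j) := by
  have hcos := cos_polygonAngle_sub_le_of_not_adj hne hij
  have hle := cos_le_one (polygonAngle g 1)
  rw [← pow_add]
  rcases neg_one_pow_eq_or ℝ (i + j : ℕ) with h | h
  · rw [h]; linarith
  · rw [h]; linarith

lemma two_mul_gramWeight_sub_eq (i j : Fin (2 * g + 2)) {c : ℝ}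
    (hc : (1 + cos (polygonAngle g 1)) / 2 +
      (1 - cos (polygonAngle g 1)) / 2 * ((-1) ^ (i : ℕ) * (-1) ^ (j : ℕ)) -
        cos (polygonAngle g i - polygonAngle g j) = c) :
    2 * gramWeight (diagonal (polygonForm g)) (polygonNormal g) i j - (polygonGap g + 1) =
      C (2 * (c * (2 / (cos (polygonAngle g 1) - cos (polygonAngle g 2)))) -
          ((-1) ^ (i : ℕ) * (-1) ^ (j : ℕ) + 3)) +
        C (2 * (c - (cos (polygonAngle g 1) - cos (polygonAngle g 2)))) * X := by
  refine Polynomial.funext fun t => ?_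
  rw [gramWeight, polygonNormal_dotProduct, polygonScale, polygonGap, ← hc]
  simp only [eval_sub, eval_mul, eval_neg, eval_add, eval_C, eval_X, eval_one, eval_ofNat]
  ring

theorem isExpanding_polygonNormal (hg : 1 ≤ g) :
    IsExpanding (SimpleGraph.cycleGraph (2 * g + 2)) nonnegPolynomials (polygonGap g)
      (gramWeight (diagonal (polygonForm g)) (polygonNormal g)) where
  diag i := by rw [gramWeight, polygonNormal_dotProduct_self]
  adj i j hij := by rw [gramWeight, polygonNormal_dotProduct_of_adj hij, neg_zero]
  far i j hne hij := by
    have hc := sub_le_of_not_adj hne hij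
    have hc' := two_le_mul_of_sub_le hg hc
    have hsign : (-1 : ℝ) ^ (i : ℕ) * (-1) ^ (j : ℕ) ≤ 1 := by
      rw [← pow_add]
      rcases neg_one_pow_eq_or ℝ (i + j : ℕ) with h | h
      · rw [h]
      · rw [h]; norm_num
    rw [two_mul_gramWeight_sub_eq i j rfl]
    exact add_mem (C_mem_nonnegPolynomials (by linarith))
      (mul_mem (C_mem_nonnegPolynomials (by linarith)) X_mem_nonnegPolynomials)
  one_le := by
    rw [polygonGap, add_sub_cancel_left]
    exact mul_mem (C_mem_nonnegPolynomials (by linarith [cos_polygonAngle_two_lt hg]))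
      X_mem_nonnegPolynomials

open Filter in
lemma tendsto_eval_polygonGap (hg : 1 ≤ g) :
    Tendsto (fun t => (polygonGap g).eval t) atTop atTop := by
  have hpos : 0 < 2 * (cos (polygonAngle g 1) - cos (polygonAngle g 2)) := by
    linarith [cos_polygonAngle_two_lt hg]
  simp only [polygonGap, eval_add, eval_one, eval_mul, eval_C, eval_X]
  exact tendsto_atTop_add_const_left _ _ (tendsto_id.const_mul_atTop hpos)

open Filter in
theorem eventually_isStretching_polygon (hg : 1 ≤ g) {W : Type*} [Group W]
    (cs : CoxeterSystem (rightAngledCoxeterMatrix (SimpleGraph.cycleGraph (2 * g + 2))) W) :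
    ∀ᶠ τ in atTop, IsStretching
      (reflectionRep cs (a := polygonNormal g) (J := diagonal (polygonForm g))
        polygonNormal_dotProduct_self fun _ _ => polygonNormal_dotProduct_of_adj)
      (polygonForm g) 3 τ :=
  eventually_isStretching_reflectionRep cs _ _ (fun _ => rfl) (isExpanding_polygonNormal hg)
    (neg_polygonForm_mem hg) abs_eval_polygonNormal_le (coeff_zero_neg_polygonForm_pos hg)
    (tendsto_eval_polygonGap hg)

end Polygon

/-! ### Proper actions -/

section ProperAction

open Matrix Polynomial LieAlgebra.Orthogonal

/-- The coordinates of a skew-symmetric matrix given by its entries above the diagonal. -/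
def skewCoordinates (ι : Type*) [Fintype ι] [LinearOrder ι] :
    so ι ℝ ≃ₗ[ℝ] ({p : ι × ι // p.1 < p.2} → ℝ) where
  toFun Z p := (Z : Matrix ι ι ℝ) p.1.1 p.1.2
  map_add' _ _ := rfl
  map_smul' _ _ := rfl
  invFun f := ⟨of fun i j =>
    if h : i < j then f ⟨(i, j), h⟩ else if h : j < i then -f ⟨(j, i), h⟩ else 0, by
      rw [mem_so]
      ext i j
      rcases lt_trichotomy i j with h | rfl | h <;> simp [*, not_lt_of_gt]⟩
  left_inv Z := by
    have hZ (i j : ι) : (Z : Matrix ι ι ℝ) j i = -(Z : Matrix ι ι ℝ) i j :=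
      congrFun₂ ((mem_so _ _ _).mp Z.2) i j
    ext i j
    rcases lt_trichotomy i j with h | rfl | h
    · simp [h]
    · simp [self_eq_neg.mp (hZ i i)]
    · simp [h, not_lt_of_gt, hZ i j]
  right_inv f := funext fun ⟨_, h⟩ => by simp [h]

/-- Transport of affine automorphisms along a linear equivalence. -/
def affineConj {V W : Type*} [AddCommGroup V] [Module ℝ V] [AddCommGroup W] [Module ℝ W]
    (e : V ≃ₗ[ℝ] W) : (V ≃ᵃ[ℝ] V) →* (W ≃ᵃ[ℝ] W) where
  toFun f := e.symm.toAffineEquiv.trans (f.trans e.toAffineEquiv)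
  map_one' := AffineEquiv.ext fun w => e.apply_symm_apply w
  map_mul' f f' := AffineEquiv.ext fun w => by simp

lemma affineConj_injective {V W : Type*} [AddCommGroup V] [Module ℝ V] [AddCommGroup W]
    [Module ℝ W] (e : V ≃ₗ[ℝ] W) : Function.Injective (affineConj e) := fun f f' h =>
  AffineEquiv.ext fun Z => by simpa [affineConj] using congrArg (fun F => F (e Z)) h

lemma affineConj_apply {V W : Type*} [AddCommGroup V] [Module ℝ V] [AddCommGroup W] [Module ℝ W]
    (e : V ≃ₗ[ℝ] W) (f : V ≃ᵃ[ℝ] V) (w : W) : affineConj e f w = e (f (e.symm w)) := rfl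

variable {ι : Type*} [Fintype ι] [DecidableEq ι] {W : Type*} [NormedAddCommGroup W]
  [NormedSpace ℝ W]

lemma exists_abs_entries_le (e : so ι ℝ ≃ₗ[ℝ] W) {K : Set W} (hK : IsCompact K) :
    ∃ C : ℝ, ∀ w ∈ K, ∀ i j, |(e.symm w : Matrix ι ι ℝ) i j| ≤ C := by
  have : FiniteDimensional ℝ W := e.finiteDimensional
  let entries : so ι ℝ →ₗ[ℝ] ι → ι → ℝ :=
    { toFun Z := (Z : Matrix ι ι ℝ), map_add' _ _ := rfl, map_smul' _ _ := rfl }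
  obtain ⟨C, hC⟩ := hK.exists_bound_of_continuousOn
    (entries ∘ₗ e.symm.toLinearMap).continuous_of_finiteDimensional.continuousOn
  exact ⟨C, fun w hw i j =>
    (norm_le_pi_norm (entries (e.symm w) i) j).trans <|
      (norm_le_pi_norm (entries (e.symm w)) i).trans (hC w hw)⟩

theorem IsStretching.exists_properlyDiscontinuous {G : Type*} [Group G]
    {ρ : G →* Matrix ι ι ℝ[X]} {d : ι → ℝ[X]} {o : ι} {τ : ℝ} (hρ : IsStretching ρ d o τ)
    (hι : 3 ≤ Fintype.card ι) (e : so ι ℝ ≃ₗ[ℝ] W) :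
    ∃ σ : G →* (W ≃ᵃ[ℝ] W), Function.Injective σ ∧
      ∀ K : Set W, IsCompact K → {g | (σ g '' K ∩ K).Nonempty}.Finite := by
  refine ⟨(affineConj e).comp (deformationAction hρ.transpose_mul_mul τ), ?_, fun K hK => ?_⟩
  · exact (affineConj_injective e).comp (hρ.deformationAction_injective hι)
  · obtain ⟨C, hC⟩ := exists_abs_entries_le e hK
    refine (hρ.finite_deformationAction_entries_le C).subset ?_
    rintro g ⟨-, ⟨w, hw, rfl⟩, hgw⟩
    exact ⟨e.symm w, hC w hw, by simpa [affineConj_apply] using hC _ hgw⟩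

end ProperAction

instance SurfaceGroup.subsingleton_zero : Subsingleton (SurfaceGroup 0) :=
  (PresentedGroup.mk_surjective {surfaceRelator 0}).subsingleton

theorem surface_group_proper_affine_action_on_R6_general (g : ℕ) :
    ∃ ρ : SurfaceGroup g →* ((Fin 6 → ℝ) ≃ᵃ[ℝ] (Fin 6 → ℝ)),
      Function.Injective ρ ∧
      (∀ K : Set (Fin 6 → ℝ), IsCompact K →
        {γ : SurfaceGroup g | ((ρ γ) '' K ∩ K).Nonempty}.Finite) := by
  rcases Nat.eq_zero_or_pos g with rfl | hg
  · exact ⟨1, Function.injective_of_subsingleton _, fun K _ => Set.toFinite _⟩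
  let cs := (rightAngledCoxeterMatrix (SimpleGraph.cycleGraph (2 * g + 2))).toCoxeterSystem
  obtain ⟨τ, hτ⟩ := (eventually_isStretching_polygon hg cs).exists
  exact (hτ.comp (SurfaceGroup.toPolygonGroup_injective cs)).exists_properlyDiscontinuous
    (by decide) <| (skewCoordinates (Fin 4)).trans <|
      LinearEquiv.funCongrLeft ℝ ℝ (Fintype.equivFinOfCardEq (by decide)).symm

/-- **Danciger–Guéritaud–Kassel**: for `g ≥ 2`, the fundamental group of the closed orientable
surface of genus `g` admits a faithful, properly discontinuous action on `ℝ⁶ ≅ 𝔰𝔩(2,ℂ)` by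
affine transformations. -/
theorem surface_group_proper_affine_action_on_R6 (g : ℕ) (hg : 2 ≤ g) :
    ∃ ρ : SurfaceGroup g →* ((Fin 6 → ℝ) ≃ᵃ[ℝ] (Fin 6 → ℝ)),
      Function.Injective ρ ∧
      (∀ K : Set (Fin 6 → ℝ), IsCompact K →
        {γ : SurfaceGroup g | ((ρ γ) '' K ∩ K).Nonempty}.Finite) :=
  surface_group_proper_affine_action_on_R6_general g
end

section
/- For i = 1, 2, let Γ_i be a finitely generated subgroup of SL(d_i,ℝ) whose inclusion is a quasi-isometric embedding: there exist constants L ≥ 1 and C ≥ 0 such that (1/L)·|γ| − C ≤ ‖κ(γ)‖ ≤ L·|γ| + C for all γ ∈ Γ_i, where |γ| is word length with respect to a fixed finite generating set and ‖κ(γ)‖ is the Euclidean norm of the Cartan projection κ(γ) = (log σ₁(γ), …, log σ_{d_i}(γ)). Then there exist d and a homomorphism ρ from the free product Γ₁ * Γ₂ into SL(d,ℝ) which is a quasi-isometric embedding: ρ is injective and there exist L' ≥ 1 and C' ≥ 0 with (1/L')·|w| − C' ≤ ‖κ(ρ(w))‖ ≤ L'·|w| + C' for all w ∈ Γ₁ *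 Γ₂, where |w| is word length in Γ₁ * Γ₂ with respect to a finite generating set. (Tsouvalas–Weisman: a free product of quasi-isometrically embedded subgroups admits a quasi-isometric embedding into some special linear group.) -/
open Matrix

/-- The `k`-th singular value (1-indexed, in nonincreasing order) of a real `d × d` matrix:
the square roots of the eigenvalues of `Aᴴ * A = Aᵀ * A`, sorted in nonincreasing order. -/
noncomputable def sval {d : ℕ} (A : Matrix (Fin d) (Fin d) ℝ) (k : ℕ) : ℝ :=
  if h : 1 ≤ k ∧ k ≤ d then
    (fun i => Real.sqrt ((Matrix.isHermitian_conjTranspose_mul_self A).eigenvalues i))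
      ((Tuple.sort fun i => Real.sqrt ((Matrix.isHermitian_conjTranspose_mul_self A).eigenvalues i))
        (Fin.rev ⟨k - 1, by omega⟩))
  else 0

/-- The Euclidean norm of the Cartan projection `κ(A) = (log σ₁(A), …, log σ_d(A))`. -/
noncomputable def cartanNorm {d : ℕ} (A : Matrix (Fin d) (Fin d) ℝ) : ℝ :=
  Real.sqrt (∑ k ∈ Finset.Icc 1 d, (Real.log (sval A k)) ^ 2)

/-- Word length of `γ` with respect to a generating set `S`: the least `n` such that
`γ` is a product of `n` elements of `S ∪ S⁻¹`. -/
noncomputable def wordLength {G : Type*} [Group G] (S : Set G) (γ : G) : ℕ :=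
  sInf {n | ∃ w : List G, w.length = n ∧ (∀ g ∈ w, g ∈ S ∨ g⁻¹ ∈ S) ∧ w.prod = γ}

/-!
For a representation of a finitely generated group, being a quasi-isometric embedding amounts to
`‖σ g‖` growing exponentially in the word length of `g`; the upper bound is automatic. Let `σ` be
a faithful representation of one factor with this growth. With `Φ = (1, -1)` and `U = (1, 1)ᵀ` one
has `Φ * (σ g ⊕ 1) * U = σ g - 1`, so the coefficient of `τ = (σ ⊕ 1) ⊗ (σ ⊕ 1)` at
`f = vec (ΦᵀΦ)` and `v = vec (UUᵀ)` is `‖σ g - 1‖²`. Since `σ` is faithful and proper, this is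
comparable to `‖τ g‖` for all `g ≠ 1`, although it vanishes at `g = 1`.

Add a trivial plane with basis `e_p, e_q` and conjugate `τ ⊕ 1` by `1 + t • X`, where `X` maps `e_q`
to `v` and `x` to `(f ⬝ᵥ x) • e_p`. The conjugate of `τ g ⊕ 1` has the term
`-t² (f ⬝ᵥ τ g *ᵥ v)` at the entry `(p, q)`, and all its other terms are `O(t ‖τ g‖)`. For large `t`
every `g ≠ 1` therefore maps the vectors whose `q`-th coordinate is dominant to vectors whose
`p`-th coordinate is dominant, expanding them exponentially in the word length of `g`. Exchanging
`p` and `q` for the other factor gives a ping-pong in which every `w` in the free product expands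
some vector exponentially in the word length of `w`.
-/

section

open scoped Matrix.Norms.Frobenius

section WordLength

variable {G H : Type*} [Group G] [Group H] {S : Set G}

lemma wordLength_prod_le {l : List G} (hl : ∀ g ∈ l, g ∈ S ∨ g⁻¹ ∈ S) :
    wordLength S l.prod ≤ l.length :=
  Nat.sInf_le ⟨l, rfl, hl, rfl⟩

lemma exists_list_length_eq_wordLength {g : G} (hg : g ∈ Subgroup.closure S) :
    ∃ l : List G, l.length = wordLength S g ∧ (∀ x ∈ l, x ∈ S ∨ x⁻¹ ∈ S) ∧ l.prod = g := by
  rw [← Subgroup.mem_toSubmonoid, Subgroup.closure_toSubmonoid] at hg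
  obtain ⟨l, hl, hprod⟩ := Submonoid.exists_list_of_mem_closure hg
  exact Nat.sInf_mem (s := {n | ∃ w : List G, w.length = n ∧ (∀ x ∈ w, x ∈ S ∨ x⁻¹ ∈ S) ∧
    w.prod = g}) ⟨l.length, l, rfl, hl, hprod⟩

lemma wordLength_one : wordLength S (1 : G) = 0 :=
  Nat.le_zero.1 <| wordLength_prod_le (S := S) (l := []) (by simp)

lemma eq_one_of_wordLength_eq_zero (hS : Subgroup.closure S = ⊤) {g : G}
    (hg : wordLength S g = 0) : g = 1 := by
  obtain ⟨l, hlen, -, rfl⟩ := exists_list_length_eq_wordLength (S := S) (g := g) (by simp [hS])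
  rw [List.length_eq_zero_iff.1 (hlen.trans hg), List.prod_nil]

lemma wordLength_mul_le (hS : Subgroup.closure S = ⊤) (g h : G) :
    wordLength S (g * h) ≤ wordLength S g + wordLength S h := by
  obtain ⟨l, hlen, hl, hg⟩ := exists_list_length_eq_wordLength (S := S) (g := g) (by simp [hS])
  obtain ⟨m, hmlen, hm, hh⟩ := exists_list_length_eq_wordLength (S := S) (g := h) (by simp [hS])
  rw [← hlen, ← hmlen, ← List.length_append, ← hg, ← hh, ← List.prod_append]
  exact wordLength_prod_le fun x hx ↦ (List.mem_append.1 hx).elim (hl x) (hm x)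

lemma wordLength_map_le (hS : Subgroup.closure S = ⊤) {T : Set H} (φ : G →* H)
    (hφ : Set.MapsTo φ S T) (g : G) : wordLength T (φ g) ≤ wordLength S g := by
  obtain ⟨l, hlen, hl, rfl⟩ := exists_list_length_eq_wordLength (S := S) (g := g) (by simp [hS])
  rw [map_list_prod, ← hlen, ← List.length_map (f := φ)]
  refine wordLength_prod_le fun x hx ↦ ?_
  obtain ⟨y, hy, rfl⟩ := List.mem_map.1 hx
  exact (hl y hy).imp (@hφ y) fun h ↦ map_inv φ y ▸ hφ h

lemma closure_preimage_subtype_val {Γ : Subgroup G} (hΓ : Subgroup.closure S = Γ) :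
    Subgroup.closure (Subtype.val ⁻¹' S : Set Γ) = ⊤ := by
  subst hΓ
  exact Subgroup.closure_closure_coe_preimage

lemma wordLength_preimage_subtype_val_le {Γ : Subgroup G} (hΓ : Subgroup.closure S = Γ)
    (g : Γ) : wordLength (Subtype.val ⁻¹' S : Set Γ) g ≤ wordLength S (g : G) := by
  have hSΓ : ∀ x, x ∈ S ∨ x⁻¹ ∈ S → x ∈ Γ := fun x hx ↦ hΓ ▸ hx.elim
    (fun h ↦ Subgroup.subset_closure h) fun h ↦ inv_mem_iff.1 (Subgroup.subset_closure h)
  obtain ⟨l, hlen, hl, hprod⟩ := exists_list_length_eq_wordLength (S := S) (g := (g : G))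
    (hΓ.symm ▸ g.2)
  lift l to List Γ using fun x hx ↦ hSΓ x (hl x hx)
  have hg : l.prod = g := Subtype.ext (by rw [Subgroup.val_list_prod, hprod])
  rw [← hlen, ← hg, List.length_map]
  exact wordLength_prod_le fun x hx ↦ hl x (List.mem_map_of_mem hx)

lemma finite_setOf_wordLength_le (hS : Subgroup.closure S = ⊤) (hfin : S.Finite) (n : ℕ) :
    {g | wordLength S g ≤ n}.Finite := by
  have : Finite ↥(S ∪ S⁻¹) := hfin.union hfin.inv
  refine ((List.finite_length_le ↥(S ∪ S⁻¹) n).image fun l ↦ (l.map (↑)).prod).subset ?_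
  intro g (hg : _ ≤ n)
  obtain ⟨l, hlen, hl, rfl⟩ := exists_list_length_eq_wordLength (S := S) (g := g) (by simp [hS])
  lift l to List ↥(S ∪ S⁻¹) using hl
  exact ⟨l, by simpa using hlen.trans_le hg, rfl⟩

lemma exists_le_mul_pow_wordLength (hS : Subgroup.closure S = ⊤) (hfin : S.Finite) (f : G → ℝ)
    (hf₀ : ∀ g, 0 ≤ f g) (hf : ∀ g h, f (g * h) ≤ f g * f h) :
    ∃ B : ℝ, 1 ≤ B ∧ ∀ g, f g ≤ f 1 * B ^ wordLength S g := by
  obtain ⟨M, hM⟩ := ((hfin.union hfin.inv).image f).bddAbove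
  refine ⟨max 1 M, le_max_left 1 M, fun g ↦ ?_⟩
  obtain ⟨l, hlen, hl, rfl⟩ := exists_list_length_eq_wordLength (S := S) (g := g) (by simp [hS])
  rw [← hlen]
  clear hlen
  induction l with
  | nil => simp
  | cons a l ih =>
    have ha : f a ≤ max 1 M := le_max_of_le_right (hM ⟨a, hl a List.mem_cons_self, rfl⟩)
    rw [List.prod_cons, List.length_cons]
    calc f (a * l.prod) ≤ f a * f l.prod := hf a l.prod
      _ ≤ max 1 M * (f 1 * max 1 M ^ l.length) := by
        gcongr
        exacts [hf₀ _, ih fun x hx ↦ hl x (List.mem_cons_of_mem a hx)]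
      _ = f 1 * max 1 M ^ (l.length + 1) := by ring

end WordLength

section CartanNorm

lemma frobenius_norm_sq {m n : Type*} [Fintype m] [Fintype n] (A : Matrix m n ℝ) :
    ‖A‖ ^ 2 = ∑ i, ∑ j, A i j ^ 2 := by
  rw [frobenius_norm_def, ← Real.rpow_natCast, ← Real.rpow_mul (by positivity)]
  simp

lemma frobenius_norm_sq_eq_trace {m n : Type*} [Fintype m] [Fintype n] (A : Matrix m n ℝ) :
    ‖A‖ ^ 2 = (Aᵀ * A).trace := by
  simp only [frobenius_norm_sq, trace, diag_apply, mul_apply, transpose_apply, ← sq]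
  exact Finset.sum_comm

lemma abs_apply_le_frobenius_norm {m n : Type*} [Fintype m] [Fintype n] (A : Matrix m n ℝ)
    (i : m) (j : n) : |A i j| ≤ ‖A‖ := by
  refine abs_le_of_sq_le_sq ?_ (norm_nonneg A)
  rw [frobenius_norm_sq]
  exact (Finset.single_le_sum (f := fun j ↦ A i j ^ 2) (fun _ _ ↦ sq_nonneg _)
    (Finset.mem_univ j)).trans (Finset.single_le_sum (f := fun i ↦ ∑ j, A i j ^ 2)
      (fun _ _ ↦ Finset.sum_nonneg fun _ _ ↦ sq_nonneg _) (Finset.mem_univ i))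

/-- The singular values of a real matrix in unsorted order, indexed by its columns, so that sums
and products over all of them need no sorting. -/
noncomputable def singularValue {m n : Type*} [Fintype m] [Fintype n] [DecidableEq n]
    (A : Matrix m n ℝ) (i : n) : ℝ :=
  √((isHermitian_conjTranspose_mul_self A).eigenvalues i)

section

variable {m n : Type*} [Fintype m] [Fintype n] [DecidableEq n]

lemma sq_singularValue (A : Matrix m n ℝ) (i : n) :
    singularValue A i ^ 2 = (isHermitian_conjTranspose_mul_self A).eigenvalues i :=
  Real.sq_sqrt ((posSemidef_conjTranspose_mul_self A).eigenvalues_nonneg i)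

lemma sum_sq_singularValue (A : Matrix m n ℝ) : ∑ i, singularValue A i ^ 2 = ‖A‖ ^ 2 := by
  have h := (isHermitian_conjTranspose_mul_self A).trace_eq_sum_eigenvalues
  rw [frobenius_norm_sq_eq_trace, ← conjTranspose_eq_transpose_of_trivial, h]
  simp [sq_singularValue]

lemma singularValue_le_norm (A : Matrix m n ℝ) (i : n) : singularValue A i ≤ ‖A‖ := by
  refine le_of_sq_le_sq ?_ (norm_nonneg A)
  rw [← sum_sq_singularValue]
  exact Finset.single_le_sum (fun _ _ ↦ sq_nonneg _) (Finset.mem_univ i)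

lemma prod_singularValue (A : Matrix n n ℝ) : ∏ i, singularValue A i = |A.det| := by
  have h := (isHermitian_conjTranspose_mul_self A).det_eq_prod_eigenvalues
  have hnonneg : 0 ≤ ∏ i, singularValue A i := Finset.prod_nonneg fun _ _ ↦ Real.sqrt_nonneg _
  rw [← abs_of_nonneg hnonneg, ← sq_eq_sq_iff_abs_eq_abs]
  simpa [← Finset.prod_pow, sq_singularValue, ← sq] using h.symm

end

lemma sval_eq_singularValue {d : ℕ} (A : Matrix (Fin d) (Fin d) ℝ) (i : Fin d) :
    sval A (i + 1) = singularValue A (Tuple.sort (singularValue A) i.rev) := by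
  rw [sval, dif_pos ⟨by omega, by omega⟩]
  rfl

lemma cartanNorm_eq {d : ℕ} (A : Matrix (Fin d) (Fin d) ℝ) :
    cartanNorm A = √(∑ i, Real.log (singularValue A i) ^ 2) := by
  have hIcc : Finset.Icc 1 d = Finset.Ico 1 (d + 1) := rfl
  rw [cartanNorm, ← Equiv.sum_comp (Fin.revPerm.trans (Tuple.sort (singularValue A))), hIcc,
    Finset.sum_Ico_eq_sum_range, ← Fin.sum_univ_eq_sum_range, Nat.add_sub_cancel]
  simp [sval_eq_singularValue, add_comm 1]

lemma abs_le_card_mul_of_sum_eq_zero {ι : Type*} [Fintype ι] {x : ι → ℝ} {X : ℝ}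
    (hsum : ∑ i, x i = 0) (hx : ∀ i, x i ≤ X) (i : ι) : |x i| ≤ Fintype.card ι * X := by
  have hgap : X - x i ≤ Fintype.card ι * X := by
    simpa [Finset.sum_sub_distrib, hsum] using
      Finset.single_le_sum (f := fun j ↦ X - x j) (fun j _ ↦ sub_nonneg.2 (hx j))
        (Finset.mem_univ i)
  have hcard : (1 : ℝ) ≤ Fintype.card ι := mod_cast Fintype.card_pos_iff.2 ⟨i⟩
  have hX : 0 ≤ X := by
    by_contra! h
    nlinarith [hx i]
  rw [abs_le]
  constructor <;> nlinarith [hx i]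

lemma cartanNorm_le_log {d : ℕ} {A : Matrix (Fin d) (Fin d) ℝ} (hA : A.det = 1) :
    cartanNorm A ≤ d ^ 2 * Real.log (1 + ‖A‖) := by
  have hprod : ∏ i, singularValue A i = 1 := by rw [prod_singularValue, hA, abs_one]
  have hne : ∀ i ∈ Finset.univ, singularValue A i ≠ 0 :=
    Finset.prod_ne_zero_iff.1 (hprod ▸ one_ne_zero)
  have hsum : ∑ i, Real.log (singularValue A i) = 0 := by
    rw [← Real.log_prod hne, hprod, Real.log_one]
  have hlog : ∀ i, Real.log (singularValue A i) ≤ Real.log (1 + ‖A‖) := fun i ↦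
    Real.log_le_log ((Real.sqrt_nonneg _).lt_of_ne' (hne i (Finset.mem_univ i)))
      (by linarith [singularValue_le_norm A i])
  calc cartanNorm A ≤ ∑ i, |Real.log (singularValue A i)| := by
        rw [cartanNorm_eq]
        refine Real.sqrt_le_iff.2 ⟨Finset.sum_nonneg fun _ _ ↦ abs_nonneg _, ?_⟩
        simpa only [sq_abs] using
          Finset.sum_sq_le_sq_sum_of_nonneg fun i _ ↦ abs_nonneg (Real.log (singularValue A i))
    _ ≤ ∑ _i : Fin d, d * Real.log (1 + ‖A‖) := Finset.sum_le_sum fun i _ ↦ by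
        simpa using abs_le_card_mul_of_sum_eq_zero hsum hlog i
    _ = d ^ 2 * Real.log (1 + ‖A‖) := by
        rw [Finset.sum_const, Finset.card_univ, Fintype.card_fin, nsmul_eq_mul]
        ring

lemma norm_le_exp_cartanNorm {d : ℕ} (A : Matrix (Fin d) (Fin d) ℝ) :
    ‖A‖ ≤ √d * Real.exp (cartanNorm A) := by
  have hσ : ∀ i, singularValue A i ≤ Real.exp (cartanNorm A) := fun i ↦ by
    refine (Real.le_exp_log _).trans (Real.exp_le_exp.2 ?_)
    rw [cartanNorm_eq]
    exact Real.le_sqrt_of_sq_le (Finset.single_le_sum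
      (f := fun i ↦ Real.log (singularValue A i) ^ 2) (fun _ _ ↦ sq_nonneg _) (Finset.mem_univ i))
  refine le_of_sq_le_sq ?_ (by positivity)
  calc ‖A‖ ^ 2 = ∑ i, singularValue A i ^ 2 := (sum_sq_singularValue A).symm
    _ ≤ ∑ _i : Fin d, Real.exp (cartanNorm A) ^ 2 := Finset.sum_le_sum fun i _ ↦
        pow_le_pow_left₀ (Real.sqrt_nonneg _) (hσ i) 2
    _ = (√d * Real.exp (cartanNorm A)) ^ 2 := by
        rw [mul_pow, Real.sq_sqrt d.cast_nonneg]
        simp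

end CartanNorm

section ExpGrowth

variable {G : Type*} [Group G] {S : Set G}
variable {ι κ : Type*} [Fintype ι] [DecidableEq ι] [Fintype κ] [DecidableEq κ]

/-- A representation whose matrix norm grows at least exponentially in the word length. This is
the lower half of the quasi-isometric embedding condition, with logarithms removed. The summand
`1` matters only for `0 × 0` matrices, whose norm is zero. -/
def HasExpGrowth (S : Set G) (σ : G →* SpecialLinearGroup ι ℝ) : Prop :=
  ∃ ε > 0, ∃ C, ∀ g, Real.exp (ε * wordLength S g) ≤ C * (1 + ‖(σ g : Matrix ι ι ℝ)‖)

lemma HasExpGrowth.of_norm_le {σ : G →* SpecialLinearGroup ι ℝ} {τ : G →* SpecialLinearGroup κ ℝ}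
    (hσ : HasExpGrowth S σ) (hστ : ∀ g, ‖(σ g : Matrix ι ι ℝ)‖ ≤ ‖(τ g : Matrix κ κ ℝ)‖) :
    HasExpGrowth S τ := by
  obtain ⟨ε, hε, C, hC⟩ := hσ
  have hC₀ : 0 ≤ C := nonneg_of_mul_nonneg_left ((Real.exp_pos _).le.trans (hC 1)) (by positivity)
  exact ⟨ε, hε, C, fun g ↦ (hC g).trans (by gcongr; exact hστ g)⟩

lemma HasExpGrowth.of_le_cartanNorm {d : ℕ} {σ : G →* SpecialLinearGroup (Fin d) ℝ} {L C : ℝ}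
    (hL : 0 < L)
    (hσ : ∀ g, 1 / L * wordLength S g - C ≤ cartanNorm (σ g : Matrix (Fin d) (Fin d) ℝ)) :
    HasExpGrowth S σ := by
  refine ⟨1 / L / (d ^ 2 + 1), by positivity, Real.exp |C|, fun g ↦ ?_⟩
  have hpos : 0 < 1 + ‖(σ g : Matrix (Fin d) (Fin d) ℝ)‖ := by positivity
  have hlog : 0 ≤ Real.log (1 + ‖(σ g : Matrix (Fin d) (Fin d) ℝ)‖) := Real.log_nonneg (by simp)
  have hupper := (hσ g).trans (cartanNorm_le_log (σ g).2)
  rw [← Real.exp_log hpos, ← Real.exp_add, Real.exp_le_exp, div_mul_eq_mul_div,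
    div_le_iff₀ (by positivity)]
  nlinarith [le_abs_self C, abs_nonneg C, mul_nonneg (sq_nonneg (d : ℝ)) (abs_nonneg C)]

lemma hasExpGrowth_subtype {d : ℕ} {Γ : Subgroup (SpecialLinearGroup (Fin d) ℝ)}
    {S : Set (SpecialLinearGroup (Fin d) ℝ)} (hS : Subgroup.closure S = Γ) {L C : ℝ} (hL : 0 < L)
    (hΓ : ∀ γ ∈ Γ, 1 / L * wordLength S γ - C ≤ cartanNorm (γ : Matrix (Fin d) (Fin d) ℝ)) :
    HasExpGrowth (Subtype.val ⁻¹' S) Γ.subtype :=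
  .of_le_cartanNorm hL fun γ ↦ (hΓ γ γ.2).trans' (by
    gcongr
    exact wordLength_preimage_subtype_val_le hS γ)

lemma HasExpGrowth.finite_setOf_norm_le {σ : G →* SpecialLinearGroup ι ℝ}
    (hσ : HasExpGrowth S σ) (hS : Subgroup.closure S = ⊤) (hfin : S.Finite) (R : ℝ) :
    {g | ‖(σ g : Matrix ι ι ℝ)‖ ≤ R}.Finite := by
  obtain ⟨ε, hε, C, hC⟩ := hσ
  refine (finite_setOf_wordLength_le hS hfin ⌈|C| * (1 + R) / ε⌉₊).subset fun g hg ↦ ?_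
  have hlin : (wordLength S g : ℝ) ≤ |C| * (1 + R) / ε := by
    rw [le_div_iff₀' hε]
    calc ε * wordLength S g ≤ Real.exp (ε * wordLength S g) := by
          linarith [Real.add_one_le_exp (ε * wordLength S g)]
      _ ≤ |C| * (1 + ‖(σ g : Matrix ι ι ℝ)‖) := (hC g).trans (by gcongr; exact le_abs_self C)
      _ ≤ |C| * (1 + R) := by gcongr; exact hg
  exact_mod_cast hlin.trans (Nat.le_ceil _)

lemma HasExpGrowth.exists_le_cartanNorm {d : ℕ} {σ : G →* SpecialLinearGroup (Fin d) ℝ}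
    (hσ : HasExpGrowth S σ) : ∃ ε > 0, ∃ C : ℝ, ∀ g,
      ε * wordLength S g - C ≤ cartanNorm (σ g : Matrix (Fin d) (Fin d) ℝ) := by
  obtain ⟨ε, hε, C, hC⟩ := hσ
  refine ⟨ε, hε, |C| * (1 + √d), fun g ↦ ?_⟩
  set k := cartanNorm (σ g : Matrix (Fin d) (Fin d) ℝ)
  have hk : 1 ≤ Real.exp k := Real.one_le_exp (Real.sqrt_nonneg _)
  have hexp : Real.exp (ε * wordLength S g) ≤ Real.exp (|C| * (1 + √d) + k) := by
    calc Real.exp (ε * wordLength S g) ≤ |C| * (1 + ‖(σ g : Matrix (Fin d) (Fin d) ℝ)‖) :=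
          (hC g).trans (by gcongr; exact le_abs_self C)
      _ ≤ |C| * (Real.exp k + √d * Real.exp k) := by
          gcongr
          exact norm_le_exp_cartanNorm _
      _ = |C| * (1 + √d) * Real.exp k := by ring
      _ ≤ Real.exp (|C| * (1 + √d)) * Real.exp k := by
          gcongr
          linarith [Real.add_one_le_exp (|C| * (1 + √d))]
      _ = Real.exp (|C| * (1 + √d) + k) := (Real.exp_add _ _).symm
  linarith [Real.exp_le_exp.1 hexp]

lemma exists_cartanNorm_le (hS : Subgroup.closure S = ⊤) (hfin : S.Finite) {d : ℕ}
    (σ : G →* SpecialLinearGroup (Fin d) ℝ) : ∃ A C : ℝ, ∀ g,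
      cartanNorm (σ g : Matrix (Fin d) (Fin d) ℝ) ≤ A * wordLength S g + C := by
  obtain ⟨B, hB, hσB⟩ := exists_le_mul_pow_wordLength hS hfin
    (fun g ↦ ‖(σ g : Matrix (Fin d) (Fin d) ℝ)‖) (fun _ ↦ norm_nonneg _) fun g h ↦ by
      simpa using norm_mul_le (σ g : Matrix (Fin d) (Fin d) ℝ) (σ h)
  set N := ‖(σ 1 : Matrix (Fin d) (Fin d) ℝ)‖
  refine ⟨d ^ 2 * Real.log B, d ^ 2 * Real.log (1 + N), fun g ↦ ?_⟩
  have hpow : 1 ≤ B ^ wordLength S g := one_le_pow₀ hB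
  have hnorm : 1 + ‖(σ g : Matrix (Fin d) (Fin d) ℝ)‖ ≤ (1 + N) * B ^ wordLength S g := by
    linarith [hσB g]
  calc cartanNorm (σ g : Matrix (Fin d) (Fin d) ℝ)
      ≤ d ^ 2 * Real.log (1 + ‖(σ g : Matrix (Fin d) (Fin d) ℝ)‖) := cartanNorm_le_log (σ g).2
    _ ≤ d ^ 2 * Real.log ((1 + N) * B ^ wordLength S g) := by gcongr
    _ = d ^ 2 * Real.log B * wordLength S g + d ^ 2 * Real.log (1 + N) := by
      rw [Real.log_mul (by positivity) (by positivity), Real.log_pow]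
      ring

lemma exists_quasiIsometry_constants {α : Type*} {ℓ f : α → ℝ} (hℓ : ∀ a, 0 ≤ ℓ a)
    (hlower : ∃ ε > 0, ∃ C, ∀ a, ε * ℓ a - C ≤ f a) (hupper : ∃ A C, ∀ a, f a ≤ A * ℓ a + C) :
    ∃ L C : ℝ, 1 ≤ L ∧ 0 ≤ C ∧ ∀ a, 1 / L * ℓ a - C ≤ f a ∧ f a ≤ L * ℓ a + C := by
  obtain ⟨ε, hε, C₁, hC₁⟩ := hlower
  obtain ⟨A, C₂, hC₂⟩ := hupper
  refine ⟨max 1 (max (1 / ε) A), max 0 (max C₁ C₂), by simp, by simp, fun a ↦ ⟨?_, ?_⟩⟩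
  · have hL : 1 / max 1 (max (1 / ε) A) ≤ ε :=
      (one_div_le (by positivity) hε).2 (by simp)
    have hC : C₁ ≤ max 0 (max C₁ C₂) := by simp
    linarith [hC₁ a, mul_le_mul_of_nonneg_right hL (hℓ a)]
  · have hL : A ≤ max 1 (max (1 / ε) A) := by simp
    have hC : C₂ ≤ max 0 (max C₁ C₂) := by simp
    linarith [hC₂ a, mul_le_mul_of_nonneg_right hL (hℓ a)]

end ExpGrowth

section PingPong

open Monoid (Coprod)

variable {G H M E : Type*} [Group G] [Group H]

/-- The elements of a free product that are alternating products of nontrivial elements of the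
two factors. The index is `true` if the leftmost syllable lies in `G`, `false` if it lies in `H`;
the empty product has both indices. -/
inductive IsAlternating : Bool → Coprod G H → Prop
  | one (s : Bool) : IsAlternating s 1
  | inl_mul {a : G} {w : Coprod G H} (ha : a ≠ 1) (hw : IsAlternating false w) :
      IsAlternating true (Coprod.inl a * w)
  | inr_mul {b : H} {w : Coprod G H} (hb : b ≠ 1) (hw : IsAlternating true w) :
      IsAlternating false (Coprod.inr b * w)

namespace IsAlternating

lemma exists_inl_mul (a : G) {w : Coprod G H} (hw : IsAlternating false w) :
    ∃ s, IsAlternating s (Coprod.inl a * w) := by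
  obtain rfl | ha := eq_or_ne a 1
  · exact ⟨false, by rwa [map_one, one_mul]⟩
  · exact ⟨true, .inl_mul ha hw⟩

lemma exists_inr_mul (b : H) {w : Coprod G H} (hw : IsAlternating true w) :
    ∃ s, IsAlternating s (Coprod.inr b * w) := by
  obtain rfl | hb := eq_or_ne b 1
  · exact ⟨true, by rwa [map_one, one_mul]⟩
  · exact ⟨false, .inr_mul hb hw⟩

end IsAlternating

lemma exists_isAlternating (w : Coprod G H) : ∃ s, IsAlternating s w := by
  induction w using Coprod.induction_on' with
  | one => exact ⟨true, .one true⟩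
  | inl_mul a w ih =>
    obtain ⟨_, hw⟩ := ih
    cases hw with
    | one => exact (IsAlternating.one false).exists_inl_mul a
    | inl_mul ha hw =>
      rw [← mul_assoc, ← map_mul]
      exact hw.exists_inl_mul _
    | inr_mul hb hw => exact (hw.inr_mul hb).exists_inl_mul a
  | inr_mul b w ih =>
    obtain ⟨_, hw⟩ := ih
    cases hw with
    | one => exact (IsAlternating.one true).exists_inr_mul b
    | inl_mul ha hw => exact (hw.inl_mul ha).exists_inr_mul b
    | inr_mul hb hw =>
      rw [← mul_assoc, ← map_mul]
      exact hw.exists_inr_mul _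

variable [Monoid M] [NormedAddCommGroup E] [MulAction M E]

/-- The ping-pong condition with rates: each nontrivial `g` maps `A` into `B` and expands the norm
of every vector in `A` by a factor of at least `r g`. -/
def PingPong (ρ : G →* M) (r : G → ℝ) (A B : Set E) : Prop :=
  ∀ g ≠ 1, ∀ x ∈ A, ρ g • x ∈ B ∧ r g * ‖x‖ ≤ ‖ρ g • x‖

lemma PingPong.mono {ρ : G →* M} {r r' : G → ℝ} {A B : Set E} (h : PingPong ρ r A B)
    (hr : ∀ g, r' g ≤ r g) : PingPong ρ r' A B := fun g hg x hx ↦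
  ⟨(h g hg x hx).1, (mul_le_mul_of_nonneg_right (hr g) (norm_nonneg x)).trans (h g hg x hx).2⟩

variable {ρ₁ : G →* M} {ρ₂ : H →* M} {r : Coprod G H → ℝ} {A B : Set E}

lemma IsAlternating.exists_smul_mem (hr₀ : ∀ w, 0 ≤ r w) (hr₁ : r 1 ≤ 1)
    (hr : ∀ v w, r (v * w) ≤ r v * r w) (hA : ∃ x ∈ A, x ≠ 0) (hB : ∃ x ∈ B, x ≠ 0)
    (h₁ : PingPong ρ₁ (r ∘ Coprod.inl) A B) (h₂ : PingPong ρ₂ (r ∘ Coprod.inr) B A)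
    {s : Bool} {w : Coprod G H} (hw : IsAlternating s w) :
    ∃ x ≠ 0, Coprod.lift ρ₁ ρ₂ w • x ∈ cond s B A ∧ r w * ‖x‖ ≤ ‖Coprod.lift ρ₁ ρ₂ w • x‖ := by
  have expand {v w : Coprod G H} {x : E}
      (hw : r w * ‖x‖ ≤ ‖Coprod.lift ρ₁ ρ₂ w • x‖)
      (hv : r v * ‖Coprod.lift ρ₁ ρ₂ w • x‖ ≤
        ‖Coprod.lift ρ₁ ρ₂ v • Coprod.lift ρ₁ ρ₂ w • x‖) :
      r (v * w) * ‖x‖ ≤ ‖Coprod.lift ρ₁ ρ₂ (v * w) • x‖ :=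
    calc r (v * w) * ‖x‖ ≤ r v * (r w * ‖x‖) := by
          rw [← mul_assoc]
          exact mul_le_mul_of_nonneg_right (hr v w) (norm_nonneg x)
      _ ≤ r v * ‖Coprod.lift ρ₁ ρ₂ w • x‖ := mul_le_mul_of_nonneg_left hw (hr₀ v)
      _ ≤ ‖Coprod.lift ρ₁ ρ₂ (v * w) • x‖ := by rwa [map_mul, mul_smul]
  induction hw with
  | one s =>
    obtain ⟨x, hx, hx₀⟩ : ∃ x ∈ cond s B A, x ≠ 0 := by cases s <;> assumption
    refine ⟨x, hx₀, ?_⟩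
    rw [map_one, one_smul]
    exact ⟨hx, mul_le_of_le_one_left (norm_nonneg x) hr₁⟩
  | @inl_mul a w ha _ ih =>
    obtain ⟨x, hx₀, hxA, hx⟩ := ih
    have hstep := h₁ a ha _ hxA
    rw [← Coprod.lift_apply_inl ρ₁ ρ₂ a] at hstep
    exact ⟨x, hx₀, by simpa only [map_mul, mul_smul, cond] using hstep.1, expand hx hstep.2⟩
  | @inr_mul b w hb _ ih =>
    obtain ⟨x, hx₀, hxB, hx⟩ := ih
    have hstep := h₂ b hb _ hxB
    rw [← Coprod.lift_apply_inr ρ₁ ρ₂ b] at hstep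
    exact ⟨x, hx₀, by simpa only [map_mul, mul_smul, cond] using hstep.1, expand hx hstep.2⟩

theorem PingPong.exists_mul_norm_le_norm_smul (hr₀ : ∀ w, 0 ≤ r w) (hr₁ : r 1 ≤ 1)
    (hr : ∀ v w, r (v * w) ≤ r v * r w) (hA : ∃ x ∈ A, x ≠ 0) (hB : ∃ x ∈ B, x ≠ 0)
    (h₁ : PingPong ρ₁ (r ∘ Coprod.inl) A B) (h₂ : PingPong ρ₂ (r ∘ Coprod.inr) B A)
    (w : Coprod G H) : ∃ x : E, x ≠ 0 ∧ r w * ‖x‖ ≤ ‖Coprod.lift ρ₁ ρ₂ w • x‖ := by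
  obtain ⟨s, hw⟩ := exists_isAlternating w
  obtain ⟨x, hx₀, -, hx⟩ := hw.exists_smul_mem hr₀ hr₁ hr hA hB h₁ h₂
  exact ⟨x, hx₀, hx⟩

end PingPong

section Representations

open scoped Kronecker

variable {m n R : Type*} [Fintype m] [DecidableEq m] [Fintype n] [DecidableEq n] [CommRing R]

/-- The direct sum of two special linear representations, as the block diagonal embedding. -/
def directSumSL :
    SpecialLinearGroup m R × SpecialLinearGroup n R →* SpecialLinearGroup (m ⊕ n) R where
  toFun g := ⟨fromBlocks g.1 0 0 g.2, by simp⟩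
  map_one' := Subtype.ext fromBlocks_one
  map_mul' g h := Subtype.ext <| by
    refine .trans ?_ (fromBlocks_multiply _ _ _ _ _ _ _ _).symm
    simp

/-- The tensor square of the standard representation, in the basis `eᵢ ⊗ eⱼ`. -/
def tensorSquareSL : SpecialLinearGroup n R →* SpecialLinearGroup (n × n) R where
  toFun g := ⟨(g : Matrix n n R) ⊗ₖ (g : Matrix n n R), by simp [det_kronecker]⟩
  map_one' := Subtype.ext one_kronecker_one
  map_mul' g h := Subtype.ext (mul_kronecker_mul g.1 h.1 g.1 h.1)

/-- Relabelling the coordinates of the standard representation, used to pass from a general index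
type to `Fin d`. -/
def reindexSL (e : m ≃ n) : SpecialLinearGroup m R →* SpecialLinearGroup n R where
  toFun g := ⟨reindexAlgEquiv R R e g, by simp⟩
  map_one' := Subtype.ext (map_one _)
  map_mul' g h := Subtype.ext (map_mul (reindexAlgEquiv R R e) g.1 h.1)

lemma coe_directSumSL (g : SpecialLinearGroup m R × SpecialLinearGroup n R) :
    (directSumSL g : Matrix (m ⊕ n) (m ⊕ n) R) = fromBlocks g.1 0 0 g.2 := rfl

lemma coe_tensorSquareSL (g : SpecialLinearGroup n R) :
    (tensorSquareSL g : Matrix (n × n) (n × n) R) = (g : Matrix n n R) ⊗ₖ (g : Matrix n n R) := rfl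

lemma coe_reindexSL (e : m ≃ n) (g : SpecialLinearGroup m R) :
    (reindexSL e g : Matrix n n R) = reindex e e g := rfl

lemma directSumSL_injective : Function.Injective (directSumSL (m := m) (n := n) (R := R)) :=
  fun _ _ h ↦ have hblocks := fromBlocks_inj.1 (congrArg Subtype.val h)
  Prod.ext (Subtype.ext hblocks.1) (Subtype.ext hblocks.2.2.2)

lemma reindexSL_injective (e : m ≃ n) :
    Function.Injective (reindexSL e : SpecialLinearGroup m R →* SpecialLinearGroup n R) :=
  fun _ _ h ↦ Subtype.ext ((reindexAlgEquiv R R e).injective (congrArg Subtype.val h))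

lemma norm_reindexSL (e : m ≃ n) (g : SpecialLinearGroup m ℝ) :
    ‖(reindexSL e g : Matrix n n ℝ)‖ = ‖(g : Matrix m m ℝ)‖ := by
  refine (pow_left_inj₀ (norm_nonneg _) (norm_nonneg _) two_ne_zero).1 ?_
  rw [frobenius_norm_sq, frobenius_norm_sq, ← e.sum_comp]
  refine Finset.sum_congr rfl fun i _ ↦ ?_
  rw [← e.sum_comp]
  simp [coe_reindexSL]

lemma norm_sq_directSumSL (g : SpecialLinearGroup m ℝ × SpecialLinearGroup n ℝ) :
    ‖(directSumSL g : Matrix (m ⊕ n) (m ⊕ n) ℝ)‖ ^ 2 =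
      ‖(g.1 : Matrix m m ℝ)‖ ^ 2 + ‖(g.2 : Matrix n n ℝ)‖ ^ 2 := by
  simp [frobenius_norm_sq, coe_directSumSL]

lemma norm_fst_le_norm_directSumSL (g : SpecialLinearGroup m ℝ × SpecialLinearGroup n ℝ) :
    ‖(g.1 : Matrix m m ℝ)‖ ≤ ‖(directSumSL g : Matrix (m ⊕ n) (m ⊕ n) ℝ)‖ :=
  le_of_sq_le_sq (by rw [norm_sq_directSumSL]; exact le_add_of_nonneg_right (sq_nonneg _))
    (norm_nonneg _)

lemma norm_snd_le_norm_directSumSL (g : SpecialLinearGroup m ℝ × SpecialLinearGroup n ℝ) :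
    ‖(g.2 : Matrix n n ℝ)‖ ≤ ‖(directSumSL g : Matrix (m ⊕ n) (m ⊕ n) ℝ)‖ :=
  le_of_sq_le_sq (by rw [norm_sq_directSumSL]; exact le_add_of_nonneg_left (sq_nonneg _))
    (norm_nonneg _)

lemma norm_directSumSL_le (g : SpecialLinearGroup m ℝ × SpecialLinearGroup n ℝ) :
    ‖(directSumSL g : Matrix (m ⊕ n) (m ⊕ n) ℝ)‖ ≤
      ‖(g.1 : Matrix m m ℝ)‖ + ‖(g.2 : Matrix n n ℝ)‖ := by
  refine le_of_sq_le_sq ?_ (by positivity)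
  rw [norm_sq_directSumSL]
  nlinarith [mul_nonneg (norm_nonneg (g.1 : Matrix m m ℝ)) (norm_nonneg (g.2 : Matrix n n ℝ))]

lemma norm_tensorSquareSL (g : SpecialLinearGroup n ℝ) :
    ‖(tensorSquareSL g : Matrix (n × n) (n × n) ℝ)‖ = ‖(g : Matrix n n ℝ)‖ ^ 2 := by
  refine (pow_left_inj₀ (norm_nonneg _) (by positivity) two_ne_zero).1 ?_
  simp only [frobenius_norm_sq, coe_tensorSquareSL, kroneckerMap_apply, mul_pow,
    Fintype.sum_prod_type]
  simp only [sq (Finset.sum _ _), Finset.sum_mul_sum]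

end Representations

section MatrixCoefficient

open scoped Kronecker

lemma exists_one_add_norm_le_mul_norm_sub {α E : Type*} [NormedAddCommGroup E] {u : α → E}
    (hu : ∀ R, {a | ‖u a‖ ≤ R}.Finite) (e : E) :
    ∃ C, ∀ a, u a ≠ e → 1 + ‖u a‖ ≤ C * ‖u a - e‖ := by
  obtain ⟨M, hM⟩ := ((hu (2 * ‖e‖ + 1)).image fun a ↦ (1 + ‖u a‖) / ‖u a - e‖).bddAbove
  refine ⟨max 2 M, fun a ha ↦ ?_⟩
  obtain hsmall | hlarge := le_or_gt ‖u a‖ (2 * ‖e‖ + 1)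
  · rw [← div_le_iff₀ (norm_pos_iff.2 (sub_ne_zero.2 ha))]
    exact le_max_of_le_right (hM ⟨a, hsmall, rfl⟩)
  · calc 1 + ‖u a‖ ≤ 2 * ‖u a - e‖ := by linarith [norm_sub_norm_le (u a) e]
      _ ≤ max 2 M * ‖u a - e‖ := by gcongr; exact le_max_left 2 M

lemma vec_dotProduct_kronecker_mulVec_vec {l m n : Type*} [Fintype l] [Fintype m] [Fintype n]
    (Φ : Matrix l n ℝ) (A : Matrix n n ℝ) (U : Matrix n m ℝ) :
    vec (Φᵀ * Φ) ⬝ᵥ (A ⊗ₖ A) *ᵥ vec (U * Uᵀ) = ‖Φ * A * U‖ ^ 2 := by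
  rw [kronecker_mulVec_vec, vec_dotProduct_vec, ← frobenius_norm_transpose (Φ * A * U),
    frobenius_norm_sq_eq_trace]
  simp only [transpose_mul, transpose_transpose, Matrix.mul_assoc]
  rw [trace_mul_comm]
  simp only [Matrix.mul_assoc]

variable {G n : Type*} [Group G] [Fintype n] [DecidableEq n]

/-- The tensor square of the sum of a representation and a trivial one of the same dimension. It
has a matrix coefficient equal to `‖σ g - 1‖ ^ 2`. -/
def doubledTensorSquare (σ : G →* SpecialLinearGroup n ℝ) :
    G →* SpecialLinearGroup ((n ⊕ n) × (n ⊕ n)) ℝ :=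
  (tensorSquareSL.comp directSumSL).comp (σ.prod 1)

lemma norm_doubledTensorSquare (σ : G →* SpecialLinearGroup n ℝ) (g : G) :
    ‖(doubledTensorSquare σ g : Matrix ((n ⊕ n) × (n ⊕ n)) ((n ⊕ n) × (n ⊕ n)) ℝ)‖ =
      ‖(σ g : Matrix n n ℝ)‖ ^ 2 + ‖(1 : Matrix n n ℝ)‖ ^ 2 := by
  simp [doubledTensorSquare, norm_tensorSquareSL, norm_sq_directSumSL]

lemma exists_dotProduct_doubledTensorSquare_mulVec (n : Type*) [Fintype n] [DecidableEq n] :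
    ∃ f v : (n ⊕ n) × (n ⊕ n) → ℝ, f ⬝ᵥ v = 0 ∧
      ∀ {G : Type*} [Group G] (σ : G →* SpecialLinearGroup n ℝ) (g : G),
        f ⬝ᵥ (doubledTensorSquare σ g).1 *ᵥ v = ‖(σ g : Matrix n n ℝ) - 1‖ ^ 2 := by
  let Φ : Matrix n (n ⊕ n) ℝ := fromCols 1 (-1)
  let U : Matrix (n ⊕ n) n ℝ := fromRows 1 1
  refine ⟨vec (Φᵀ * Φ), vec (U * Uᵀ), ?_, fun σ g ↦ ?_⟩
  · have h := vec_dotProduct_kronecker_mulVec_vec Φ 1 U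
    rw [one_kronecker_one, one_mulVec, Matrix.mul_one] at h
    rw [h]
    simp [Φ, U, fromCols_mul_fromRows]
  · refine (vec_dotProduct_kronecker_mulVec_vec Φ (directSumSL (σ g, 1)).1 U).trans ?_
    congr 2
    simp [Φ, U, coe_directSumSL, fromCols_mul_fromBlocks, fromCols_mul_fromRows, sub_eq_add_neg]

lemma exists_one_add_norm_le_mul_dotProduct (σ : G →* SpecialLinearGroup n ℝ)
    (hinj : Function.Injective σ) (hproper : ∀ R, {g | ‖(σ g : Matrix n n ℝ)‖ ≤ R}.Finite) :
    ∃ f v : (n ⊕ n) × (n ⊕ n) → ℝ, f ⬝ᵥ v = 0 ∧ ∃ C, ∀ g ≠ 1,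
      1 + ‖(doubledTensorSquare σ g).1‖ ≤ C * |f ⬝ᵥ (doubledTensorSquare σ g).1 *ᵥ v| := by
  obtain ⟨f, v, hfv, hcoeff⟩ := exists_dotProduct_doubledTensorSquare_mulVec n
  obtain ⟨C, hC⟩ := exists_one_add_norm_le_mul_norm_sub hproper 1
  refine ⟨f, v, hfv, (1 + ‖(1 : Matrix n n ℝ)‖ ^ 2) * C ^ 2, fun g hg ↦ ?_⟩
  have hne : (σ g : Matrix n n ℝ) ≠ 1 := fun h ↦
    hg (hinj ((Subtype.ext h).trans (map_one σ).symm))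
  rw [hcoeff, abs_of_nonneg (sq_nonneg _), norm_doubledTensorSquare]
  have hsq := pow_le_pow_left₀ (by positivity) (hC g hne) 2
  calc 1 + (‖(σ g).1‖ ^ 2 + ‖(1 : Matrix n n ℝ)‖ ^ 2)
      ≤ (1 + ‖(1 : Matrix n n ℝ)‖ ^ 2) * (1 + ‖(σ g).1‖) ^ 2 := by
        nlinarith [norm_nonneg (σ g).1, sq_nonneg ‖(1 : Matrix n n ℝ)‖]
    _ ≤ (1 + ‖(1 : Matrix n n ℝ)‖ ^ 2) * (C * ‖(σ g).1 - 1‖) ^ 2 := by gcongr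
    _ = (1 + ‖(1 : Matrix n n ℝ)‖ ^ 2) * C ^ 2 * ‖(σ g).1 - 1‖ ^ 2 := by ring

end MatrixCoefficient

section DominantCone

lemma norm_mulVec_le {ι : Type*} [Fintype ι] (A : Matrix ι ι ℝ) (x : ι → ℝ) :
    ‖A *ᵥ x‖ ≤ Fintype.card ι * ‖A‖ * ‖x‖ := by
  refine (pi_norm_le_iff_of_nonneg (by positivity)).2 fun i ↦ ?_
  calc ‖(A *ᵥ x) i‖ ≤ ∑ j, ‖A i j * x j‖ := norm_sum_le _ _
    _ ≤ ∑ _j : ι, ‖A‖ * ‖x‖ := Finset.sum_le_sum fun j _ ↦ by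
      rw [norm_mul]
      exact mul_le_mul (abs_apply_le_frobenius_norm A i j) (norm_le_pi_norm x j)
        (norm_nonneg _) (norm_nonneg _)
    _ = Fintype.card ι * ‖A‖ * ‖x‖ := by simp [mul_assoc]

variable {ι : Type*} [Fintype ι]

/-- The vectors whose `p`-th coordinate is largest in absolute value, used as ping-pong domains.
The norm on `ι → ℝ` is the sup norm. -/
def dominantCone (p : ι) : Set (ι → ℝ) := {x | ‖x‖ ≤ |x p|}

lemma exists_mem_dominantCone_ne_zero (p : ι) : ∃ x ∈ dominantCone p, x ≠ 0 := by
  classical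
  exact ⟨Pi.single p 1, by simp [dominantCone, Pi.norm_single], by simp⟩

lemma mulVec_mem_dominantCone [DecidableEq ι] {R : Matrix ι ι ℝ} {p q : ι} {a : ℝ}
    (hR : Fintype.card ι * ‖R‖ ≤ |a| / 2) {x : ι → ℝ} (hx : x ∈ dominantCone q) :
    (R + single p q a) *ᵥ x ∈ dominantCone p ∧ |a| / 2 * ‖x‖ ≤ ‖(R + single p q a) *ᵥ x‖ := by
  set y := (R + single p q a) *ᵥ x
  have hRx (i : ι) : |(R *ᵥ x) i| ≤ |a| / 2 * ‖x‖ :=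
    (norm_le_pi_norm (R *ᵥ x) i).trans
      ((norm_mulVec_le R x).trans (mul_le_mul_of_nonneg_right hR (norm_nonneg x)))
  have hp : |a| / 2 * ‖x‖ ≤ |y p| := by
    have hyp : y p = a * x q - -(R *ᵥ x) p := by
      simp [y, add_mulVec, single_mulVec_eq]
      ring
    have haq : |a| * ‖x‖ ≤ |a * x q| := by
      rw [abs_mul]
      exact mul_le_mul_of_nonneg_left hx (abs_nonneg a)
    rw [hyp]
    have := abs_sub_abs_le_abs_sub (a * x q) (-(R *ᵥ x) p)
    rw [abs_neg] at this
    linarith [hRx p]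
  have hy : ‖y‖ ≤ |y p| := by
    refine (pi_norm_le_iff_of_nonneg (abs_nonneg _)).2 fun i ↦ ?_
    obtain rfl | hi := eq_or_ne i p
    · exact le_rfl
    · have hyi : y i = (R *ᵥ x) i := by simp [y, add_mulVec, single_mulVec_eq, hi]
      rw [hyi]
      exact (hRx i).trans hp
  exact ⟨hy, hp.trans (norm_le_pi_norm y p)⟩

end DominantCone

section Shear

variable {ι κ : Type*} [Fintype ι] [DecidableEq ι] [Fintype κ] [DecidableEq κ]

/-- The matrix on `ι ⊕ κ` that couples `ι` to the coordinates `p, q` of `κ`, mapping `e_q` to the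
vector `v` and a vector `x` supported on `ι` to `(f ⬝ᵥ x) • e_p`. It squares to zero if
`f ⬝ᵥ v = 0` and `p ≠ q`. -/
def couplingMatrix (f v : ι → ℝ) (p q : κ) : Matrix (ι ⊕ κ) (ι ⊕ κ) ℝ :=
  fromBlocks 0 (vecMulVec v (Pi.single q 1)) (vecMulVec (Pi.single p 1) f) 0

variable {f v : ι → ℝ} {p q : κ}

lemma couplingMatrix_mul_fromBlocks_mul_self (hpq : p ≠ q) (A : Matrix ι ι ℝ) :
    couplingMatrix f v p q * fromBlocks A 0 0 1 * couplingMatrix f v p q =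
      single (Sum.inr p) (Sum.inr q) (f ⬝ᵥ A *ᵥ v) := by
  have hdiag : vecMulVec v (Pi.single q 1) * vecMulVec (Pi.single p 1) f = 0 := by
    simp [vecMulVec_mul_vecMulVec, hpq]
  have hcorner : vecMulVec (Pi.single p 1) f * A * vecMulVec v (Pi.single q 1) =
      single p q (f ⬝ᵥ A *ᵥ v) := by
    rw [vecMulVec_mul, vecMulVec_mul_vecMulVec, ← dotProduct_mulVec, vecMulVec_smul,
      ← single_eq_single_vecMulVec_single, smul_single, smul_eq_mul, mul_one]
  simp only [couplingMatrix, fromBlocks_multiply, Matrix.zero_mul, Matrix.mul_zero,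
    Matrix.mul_one, add_zero, zero_add, hdiag, hcorner]
  ext (i | i) (j | j) <;> simp [single_apply]

omit [DecidableEq ι] in
lemma couplingMatrix_mul_self (hfv : f ⬝ᵥ v = 0) (hpq : p ≠ q) :
    couplingMatrix f v p q * couplingMatrix f v p q = 0 := by
  classical
  simpa [hfv] using couplingMatrix_mul_fromBlocks_mul_self (f := f) (v := v) hpq 1

lemma det_one_add_smul_couplingMatrix (hpq : p ≠ q) (t : ℝ) :
    (1 + t • couplingMatrix f v p q).det = 1 := by
  rw [couplingMatrix, fromBlocks_smul, ← fromBlocks_one, fromBlocks_add]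
  simp [vecMulVec_mul_vecMulVec, hpq]

lemma exists_coe_eq_one_add_smul_couplingMatrix (hfv : f ⬝ᵥ v = 0) (hpq : p ≠ q) (t : ℝ) :
    ∃ P : SpecialLinearGroup (ι ⊕ κ) ℝ,
      P.1 = 1 + t • couplingMatrix f v p q ∧ P⁻¹.1 = 1 - t • couplingMatrix f v p q := by
  let P (t : ℝ) : SpecialLinearGroup (ι ⊕ κ) ℝ :=
    ⟨1 + t • couplingMatrix f v p q, det_one_add_smul_couplingMatrix hpq t⟩
  have hP : P t * P (-t) = 1 := Subtype.ext <| by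
    change (1 + t • _) * (1 + (-t) • _) = 1
    simp [add_mul, mul_add, couplingMatrix_mul_self hfv hpq]
  refine ⟨P t, rfl, ?_⟩
  rw [inv_eq_of_mul_eq_one_right hP, sub_eq_add_neg, ← neg_smul]

lemma one_add_smul_mul_mul_one_sub_smul {A : Type*} [Ring A] [Algebra ℝ A] (X D : A) (t : ℝ) :
    (1 + t • X) * D * (1 - t • X) = D + t • (X * D - D * X) - t ^ 2 • (X * D * X) := by
  simp only [add_mul, mul_sub, one_mul, mul_one, smul_mul_assoc, mul_smul_comm, smul_sub,
    smul_add, smul_smul, sq]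
  abel

lemma norm_add_smul_commutator_le {A : Type*} [SeminormedRing A] [NormedAlgebra ℝ A]
    (X D : A) {t : ℝ} (ht : 1 ≤ t) :
    ‖D + t • (X * D - D * X)‖ ≤ t * (1 + 2 * ‖X‖) * ‖D‖ := by
  have hcomm : ‖X * D - D * X‖ ≤ 2 * ‖X‖ * ‖D‖ := by
    linarith [norm_sub_le (X * D) (D * X), norm_mul_le X D, norm_mul_le D X]
  calc ‖D + t • (X * D - D * X)‖ ≤ ‖D‖ + t * ‖X * D - D * X‖ := by
        refine (norm_add_le _ _).trans_eq ?_
        rw [norm_smul, Real.norm_of_nonneg (by linarith)]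
    _ ≤ t * ‖D‖ + t * (2 * ‖X‖ * ‖D‖) := by
        gcongr
        exact le_mul_of_one_le_left (norm_nonneg D) ht
    _ = t * (1 + 2 * ‖X‖) * ‖D‖ := by ring

end Shear

section DominatingCoefficient

variable {G ι κ : Type*} [Group G] [Fintype ι] [DecidableEq ι] [Fintype κ] [DecidableEq κ]

lemma exists_conj_directSumSL_eq {f v : ι → ℝ} {p q : κ} (hfv : f ⬝ᵥ v = 0) (hpq : p ≠ q) :
    ∃ K ≥ 0, ∀ t : ℝ, 1 ≤ t → ∃ P : SpecialLinearGroup (ι ⊕ κ) ℝ,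
      ∀ A : SpecialLinearGroup ι ℝ, ∃ R : Matrix (ι ⊕ κ) (ι ⊕ κ) ℝ,
        (P * directSumSL (A, 1) * P⁻¹).1 =
          R + single (Sum.inr p) (Sum.inr q) (-(t ^ 2 * (f ⬝ᵥ A.1 *ᵥ v))) ∧
        ‖R‖ ≤ K * (t * (1 + ‖A.1‖)) := by
  set X := couplingMatrix f v p q
  refine ⟨(1 + 2 * ‖X‖) * (1 + ‖(1 : Matrix κ κ ℝ)‖), by positivity, fun t ht ↦ ?_⟩
  obtain ⟨P, hP, hP'⟩ := exists_coe_eq_one_add_smul_couplingMatrix hfv hpq t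
  refine ⟨P, fun A ↦ ?_⟩
  set D := (directSumSL (A, (1 : SpecialLinearGroup κ ℝ))).1
  have hD : ‖D‖ ≤ (1 + ‖(1 : Matrix κ κ ℝ)‖) * (1 + ‖A.1‖) := by
    have hsum : ‖D‖ ≤ ‖A.1‖ + ‖(1 : Matrix κ κ ℝ)‖ := norm_directSumSL_le (A, 1)
    nlinarith [norm_nonneg A.1, norm_nonneg (1 : Matrix κ κ ℝ)]
  refine ⟨D + t • (X * D - D * X), ?_, ?_⟩
  · change P.1 * fromBlocks A.1 0 0 1 * P⁻¹.1 = _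
    rw [hP, hP', one_add_smul_mul_mul_one_sub_smul, couplingMatrix_mul_fromBlocks_mul_self hpq,
      smul_single, smul_eq_mul, sub_eq_add_neg, single_neg]
    rfl
  · calc ‖D + t • (X * D - D * X)‖ ≤ t * (1 + 2 * ‖X‖) * ‖D‖ := norm_add_smul_commutator_le X D ht
      _ ≤ t * (1 + 2 * ‖X‖) * ((1 + ‖(1 : Matrix κ κ ℝ)‖) * (1 + ‖A.1‖)) := by gcongr
      _ = (1 + 2 * ‖X‖) * (1 + ‖(1 : Matrix κ κ ℝ)‖) * (t * (1 + ‖A.1‖)) := by ring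

lemma exists_dominant_entry_conj_directSumSL {f v : ι → ℝ} {p q : κ} (hfv : f ⬝ᵥ v = 0)
    (hpq : p ≠ q) (C C' : ℝ) :
    ∃ P : SpecialLinearGroup (ι ⊕ κ) ℝ, ∀ A : SpecialLinearGroup ι ℝ,
      1 + ‖A.1‖ ≤ C * |f ⬝ᵥ A.1 *ᵥ v| → ∃ (R : Matrix (ι ⊕ κ) (ι ⊕ κ) ℝ) (a : ℝ),
        (P * directSumSL (A, 1) * P⁻¹).1 = R + single (Sum.inr p) (Sum.inr q) a ∧
        Fintype.card (ι ⊕ κ) * ‖R‖ ≤ |a| / 2 ∧ C' * (1 + ‖A.1‖) ≤ |a| / 2 := by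
  obtain ⟨K, hK, hconj⟩ := exists_conj_directSumSL_eq hfv hpq
  set N : ℝ := Fintype.card (ι ⊕ κ) * K + |C'|
  set t : ℝ := max 1 (2 * N * |C|)
  have ht : 1 ≤ t := le_max_left _ _
  obtain ⟨P, hP⟩ := hconj t ht
  refine ⟨P, fun A hA ↦ ?_⟩
  obtain ⟨R, hPR, hR⟩ := hP A
  set c := f ⬝ᵥ A.1 *ᵥ v
  have habs : |-(t ^ 2 * c)| / 2 = t * (t * |c|) / 2 := by
    rw [abs_neg, abs_mul, abs_sq]
    ring
  have hlarge : N * (t * (1 + ‖A.1‖)) ≤ t * (t * |c|) / 2 :=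
    calc N * (t * (1 + ‖A.1‖)) ≤ N * (t * (|C| * |c|)) := by
          gcongr
          exact hA.trans (mul_le_mul_of_nonneg_right (le_abs_self C) (abs_nonneg c))
      _ = 2 * N * |C| * (t * |c|) / 2 := by ring
      _ ≤ t * (t * |c|) / 2 := by
          gcongr
          exact le_max_right _ _
  refine ⟨R, -(t ^ 2 * c), hPR, ?_, ?_⟩
  · calc Fintype.card (ι ⊕ κ) * ‖R‖ ≤ Fintype.card (ι ⊕ κ) * (K * (t * (1 + ‖A.1‖))) := by gcongr
      _ = Fintype.card (ι ⊕ κ) * K * (t * (1 + ‖A.1‖)) := by ring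
      _ ≤ N * (t * (1 + ‖A.1‖)) := by
          gcongr
          exact le_add_of_nonneg_right (abs_nonneg C')
      _ ≤ |-(t ^ 2 * c)| / 2 := hlarge.trans_eq habs.symm
  · calc C' * (1 + ‖A.1‖) ≤ N * (t * (1 + ‖A.1‖)) := by
          gcongr
          · exact (le_abs_self C').trans (le_add_of_nonneg_left (by positivity))
          · exact le_mul_of_one_le_left (by positivity) ht
      _ ≤ |-(t ^ 2 * c)| / 2 := hlarge.trans_eq habs.symm

lemma exists_pingPong_dominantCone {τ : G →* SpecialLinearGroup ι ℝ} {f v : ι → ℝ} {p q : κ}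
    (hfv : f ⬝ᵥ v = 0) (hpq : p ≠ q)
    (hτ : ∃ C, ∀ g ≠ 1, 1 + ‖(τ g).1‖ ≤ C * |f ⬝ᵥ (τ g).1 *ᵥ v|) {r : G → ℝ}
    (hr : ∃ C, ∀ g, r g ≤ C * (1 + ‖(τ g).1‖)) :
    ∃ ρ : G →* SpecialLinearGroup (ι ⊕ κ) ℝ,
      PingPong ρ r (dominantCone (Sum.inr q : ι ⊕ κ)) (dominantCone (Sum.inr p : ι ⊕ κ)) := by
  obtain ⟨C, hC⟩ := hτ
  obtain ⟨C', hC'⟩ := hr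
  obtain ⟨P, hP⟩ := exists_dominant_entry_conj_directSumSL hfv hpq C C'
  refine ⟨(MulAut.conj P).toMonoidHom.comp (directSumSL.comp (τ.prod 1)), fun g hg x hx ↦ ?_⟩
  obtain ⟨R, a, hRa, hR, ha⟩ := hP (τ g) (hC g hg)
  obtain ⟨hmem, hnorm⟩ := mulVec_mem_dominantCone hR hx
  rw [← hRa] at hmem hnorm
  exact ⟨hmem, (mul_le_mul_of_nonneg_right ((hC' g).trans ha) (norm_nonneg x)).trans hnorm⟩

end DominatingCoefficient

section FreeProduct

open Monoid (Coprod)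

lemma closure_inl_union_inr {G H : Type*} [Group G] [Group H] {S₁ : Set G} {S₂ : Set H}
    (h₁ : Subgroup.closure S₁ = ⊤) (h₂ : Subgroup.closure S₂ = ⊤) :
    Subgroup.closure ((Coprod.inl '' S₁ ∪ Coprod.inr '' S₂ : Set (Coprod G H))) = ⊤ := by
  rw [Subgroup.closure_union, ← MonoidHom.map_closure, ← MonoidHom.map_closure, h₁, h₂,
    ← MonoidHom.range_eq_map, ← MonoidHom.range_eq_map, Coprod.range_inl_sup_range_inr]

lemma injective_and_hasExpGrowth_coprod_lift {G H ι : Type*} [Group G] [Group H] [Fintype ι]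
    [DecidableEq ι] {T : Set (Coprod G H)} (hT : Subgroup.closure T = ⊤)
    {ρ₁ : G →* SpecialLinearGroup ι ℝ} {ρ₂ : H →* SpecialLinearGroup ι ℝ} {A B : Set (ι → ℝ)}
    {ε : ℝ} (hε : 0 < ε) (hA : ∃ x ∈ A, x ≠ 0) (hB : ∃ x ∈ B, x ≠ 0)
    (h₁ : PingPong ρ₁ (fun g ↦ Real.exp (ε * wordLength T (Coprod.inl g))) A B)
    (h₂ : PingPong ρ₂ (fun h ↦ Real.exp (ε * wordLength T (Coprod.inr h))) B A) :
    Function.Injective (Coprod.lift ρ₁ ρ₂) ∧ HasExpGrowth T (Coprod.lift ρ₁ ρ₂) := by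
  have hexpand := PingPong.exists_mul_norm_le_norm_smul
    (r := fun w ↦ Real.exp (ε * wordLength T w)) (fun _ ↦ (Real.exp_pos _).le)
    (by simp [wordLength_one]) (fun v w ↦ by
      rw [← Real.exp_add, ← mul_add]
      gcongr
      exact_mod_cast wordLength_mul_le hT v w) hA hB h₁ h₂
  constructor
  · refine (injective_iff_map_eq_one _).2 fun w hw ↦ eq_one_of_wordLength_eq_zero hT ?_
    obtain ⟨x, hx, hwx⟩ := hexpand w
    rw [hw, one_smul, mul_le_iff_le_one_left (norm_pos_iff.2 hx), Real.exp_le_one_iff] at hwx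
    exact_mod_cast (nonpos_of_mul_nonpos_right hwx hε).antisymm (Nat.cast_nonneg _)
  · refine ⟨ε, hε, Fintype.card ι, fun w ↦ ?_⟩
    obtain ⟨x, hx, hwx⟩ := hexpand w
    refine (le_of_mul_le_mul_right (hwx.trans (norm_mulVec_le _ x)) (norm_pos_iff.2 hx)).trans ?_
    gcongr
    simp

lemma HasExpGrowth.exists_pingPong {G n κ : Type*} [Group G] [Fintype n] [DecidableEq n]
    [Fintype κ] [DecidableEq κ] {S : Set G} {σ : G →* SpecialLinearGroup n ℝ} {p q : κ}
    (hσ : HasExpGrowth S σ) (hS : Subgroup.closure S = ⊤) (hfin : S.Finite)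
    (hinj : Function.Injective σ) (hpq : p ≠ q) :
    ∃ ε > 0, ∃ ρ : G →* SpecialLinearGroup ((n ⊕ n) × (n ⊕ n) ⊕ κ) ℝ,
      PingPong ρ (fun g ↦ Real.exp (ε * wordLength S g))
        (dominantCone (Sum.inr q : (n ⊕ n) × (n ⊕ n) ⊕ κ))
        (dominantCone (Sum.inr p : (n ⊕ n) × (n ⊕ n) ⊕ κ)) := by
  obtain ⟨f, v, hfv, hcoeff⟩ :=
    exists_one_add_norm_le_mul_dotProduct σ hinj (hσ.finite_setOf_norm_le hS hfin)
  obtain ⟨ε, hε, C, hC⟩ := hσ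
  refine ⟨ε, hε, exists_pingPong_dominantCone hfv hpq hcoeff ⟨2 * |C|, fun g ↦ ?_⟩⟩
  rw [norm_doubledTensorSquare]
  calc Real.exp (ε * wordLength S g) ≤ |C| * (1 + ‖(σ g).1‖) :=
        (hC g).trans (by gcongr; exact le_abs_self C)
    _ ≤ |C| * (2 * (1 + (‖(σ g).1‖ ^ 2 + ‖(1 : Matrix n n ℝ)‖ ^ 2))) := by
        gcongr
        nlinarith [sq_nonneg (‖(σ g).1‖ - 1), sq_nonneg ‖(1 : Matrix n n ℝ)‖]
    _ = 2 * |C| * (1 + (‖(σ g).1‖ ^ 2 + ‖(1 : Matrix n n ℝ)‖ ^ 2)) := by ring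

variable {G H m n : Type*} [Group G] [Group H] [Fintype m] [DecidableEq m] [Fintype n]
  [DecidableEq n] {S₁ : Set G} {S₂ : Set H}

lemma exists_hasExpGrowth_coprod_of_same_dim
    (hS₁ : Subgroup.closure S₁ = ⊤) (hS₂ : Subgroup.closure S₂ = ⊤)
    (hfin₁ : S₁.Finite) (hfin₂ : S₂.Finite)
    {σ₁ : G →* SpecialLinearGroup n ℝ} {σ₂ : H →* SpecialLinearGroup n ℝ}
    (hinj₁ : Function.Injective σ₁) (hinj₂ : Function.Injective σ₂)
    (hσ₁ : HasExpGrowth S₁ σ₁) (hσ₂ : HasExpGrowth S₂ σ₂) :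
    ∃ ρ : Coprod G H →* SpecialLinearGroup ((n ⊕ n) × (n ⊕ n) ⊕ Bool) ℝ,
      Function.Injective ρ ∧ HasExpGrowth (Coprod.inl '' S₁ ∪ Coprod.inr '' S₂) ρ := by
  obtain ⟨ε₁, hε₁, ρ₁, hρ₁⟩ := hσ₁.exists_pingPong hS₁ hfin₁ hinj₁ Bool.false_ne_true.symm
  obtain ⟨ε₂, hε₂, ρ₂, hρ₂⟩ := hσ₂.exists_pingPong hS₂ hfin₂ hinj₂ Bool.false_ne_true
  refine ⟨Coprod.lift ρ₁ ρ₂, injective_and_hasExpGrowth_coprod_lift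
    (closure_inl_union_inr hS₁ hS₂) (lt_min hε₁ hε₂) (exists_mem_dominantCone_ne_zero _)
    (exists_mem_dominantCone_ne_zero _) (hρ₁.mono fun g ↦ ?_) (hρ₂.mono fun h ↦ ?_)⟩
  · gcongr
    · exact min_le_left ε₁ ε₂
    · exact wordLength_map_le hS₁ (Coprod.inl : _ →* Coprod G H)
        ((Set.mapsTo_image _ _).mono_right Set.subset_union_left) g
  · gcongr
    · exact min_le_right ε₁ ε₂
    · exact wordLength_map_le hS₂ (Coprod.inr : _ →* Coprod G H)
        ((Set.mapsTo_image _ _).mono_right Set.subset_union_right) h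

theorem exists_hasExpGrowth_coprod
    (hS₁ : Subgroup.closure S₁ = ⊤) (hS₂ : Subgroup.closure S₂ = ⊤)
    (hfin₁ : S₁.Finite) (hfin₂ : S₂.Finite)
    {σ₁ : G →* SpecialLinearGroup m ℝ} {σ₂ : H →* SpecialLinearGroup n ℝ}
    (hinj₁ : Function.Injective σ₁) (hinj₂ : Function.Injective σ₂)
    (hσ₁ : HasExpGrowth S₁ σ₁) (hσ₂ : HasExpGrowth S₂ σ₂) :
    ∃ (d : ℕ) (ρ : Coprod G H →* SpecialLinearGroup (Fin d) ℝ),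
      Function.Injective ρ ∧ HasExpGrowth (Coprod.inl '' S₁ ∪ Coprod.inr '' S₂) ρ := by
  let τ₁ : G →* SpecialLinearGroup (m ⊕ n) ℝ := directSumSL.comp (σ₁.prod 1)
  let τ₂ : H →* SpecialLinearGroup (m ⊕ n) ℝ := directSumSL.comp (MonoidHom.prod 1 σ₂)
  have hτinj₁ : Function.Injective τ₁ :=
    directSumSL_injective.comp fun _ _ h ↦ hinj₁ (congrArg Prod.fst h)
  have hτinj₂ : Function.Injective τ₂ :=
    directSumSL_injective.comp fun _ _ h ↦ hinj₂ (congrArg Prod.snd h)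
  have hτ₁ : HasExpGrowth S₁ τ₁ := hσ₁.of_norm_le fun g ↦ norm_fst_le_norm_directSumSL (σ₁ g, 1)
  have hτ₂ : HasExpGrowth S₂ τ₂ := hσ₂.of_norm_le fun h ↦ norm_snd_le_norm_directSumSL (1, σ₂ h)
  obtain ⟨ρ, hρinj, hρ⟩ :=
    exists_hasExpGrowth_coprod_of_same_dim hS₁ hS₂ hfin₁ hfin₂ hτinj₁ hτinj₂ hτ₁ hτ₂
  let e := Fintype.equivFin (((m ⊕ n) ⊕ (m ⊕ n)) × ((m ⊕ n) ⊕ (m ⊕ n)) ⊕ Bool)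
  exact ⟨_, (reindexSL e).comp ρ, (reindexSL_injective e).comp hρinj,
    hρ.of_norm_le fun w ↦ (norm_reindexSL e (ρ w)).ge⟩

end FreeProduct

end
/-- **Tsouvalas–Weisman**: if `Γ₁ ≤ SL(d₁, ℝ)` and `Γ₂ ≤ SL(d₂, ℝ)` are finitely generated
and quasi-isometrically embedded, then the free product `Γ₁ * Γ₂` admits a quasi-isometric
embedding into `SL(d, ℝ)` for some `d`. -/
theorem free_product_qi_embedding
    (d₁ d₂ : ℕ)
    (Γ₁ : Subgroup (Matrix.SpecialLinearGroup (Fin d₁) ℝ))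
    (Γ₂ : Subgroup (Matrix.SpecialLinearGroup (Fin d₂) ℝ))
    (S₁ : Finset (Matrix.SpecialLinearGroup (Fin d₁) ℝ))
    (S₂ : Finset (Matrix.SpecialLinearGroup (Fin d₂) ℝ))
    (hS₁ : Subgroup.closure (S₁ : Set (Matrix.SpecialLinearGroup (Fin d₁) ℝ)) = Γ₁)
    (hS₂ : Subgroup.closure (S₂ : Set (Matrix.SpecialLinearGroup (Fin d₂) ℝ)) = Γ₂)
    (L C : ℝ) (hL : 1 ≤ L) (hC : 0 ≤ C)
    (hqi₁ : ∀ γ ∈ Γ₁,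
      (1 / L) * (wordLength (S₁ : Set _) γ) - C ≤ cartanNorm (γ : Matrix (Fin d₁) (Fin d₁) ℝ) ∧
      cartanNorm (γ : Matrix (Fin d₁) (Fin d₁) ℝ) ≤ L * (wordLength (S₁ : Set _) γ) + C)
    (hqi₂ : ∀ γ ∈ Γ₂,
      (1 / L) * (wordLength (S₂ : Set _) γ) - C ≤ cartanNorm (γ : Matrix (Fin d₂) (Fin d₂) ℝ) ∧
      cartanNorm (γ : Matrix (Fin d₂) (Fin d₂) ℝ) ≤ L * (wordLength (S₂ : Set _) γ) + C) :
    ∃ (d : ℕ) (ρ : Monoid.Coprod Γ₁ Γ₂ →* Matrix.SpecialLinearGroup (Fin d) ℝ),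
      Function.Injective ρ ∧
      ∃ (T : Finset (Monoid.Coprod Γ₁ Γ₂)),
        Subgroup.closure (T : Set (Monoid.Coprod Γ₁ Γ₂)) = ⊤ ∧
        ∃ L' C' : ℝ, 1 ≤ L' ∧ 0 ≤ C' ∧
          ∀ w : Monoid.Coprod Γ₁ Γ₂,
            (1 / L') * (wordLength (T : Set _) w) - C' ≤
                cartanNorm ((ρ w : Matrix (Fin d) (Fin d) ℝ)) ∧
              cartanNorm ((ρ w : Matrix (Fin d) (Fin d) ℝ)) ≤
                L' * (wordLength (T : Set _) w) + C' := by
  have hL₀ : 0 < L := by linarith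
  have hgen₁ := closure_preimage_subtype_val hS₁
  have hgen₂ := closure_preimage_subtype_val hS₂
  have hfin₁ := S₁.finite_toSet.preimage (Subtype.val_injective (p := (· ∈ Γ₁))).injOn
  have hfin₂ := S₂.finite_toSet.preimage (Subtype.val_injective (p := (· ∈ Γ₂))).injOn
  obtain ⟨d, ρ, hinj, hρ⟩ := exists_hasExpGrowth_coprod hgen₁ hgen₂ hfin₁ hfin₂
    Γ₁.subtype_injective Γ₂.subtype_injective
    (hasExpGrowth_subtype hS₁ hL₀ fun γ hγ ↦ (hqi₁ γ hγ).1)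
    (hasExpGrowth_subtype hS₂ hL₀ fun γ hγ ↦ (hqi₂ γ hγ).1)
  have hT := closure_inl_union_inr hgen₁ hgen₂
  have hTfin : (Monoid.Coprod.inl '' (Subtype.val ⁻¹' (S₁ : Set _)) ∪
      Monoid.Coprod.inr '' (Subtype.val ⁻¹' (S₂ : Set _)) : Set (Monoid.Coprod Γ₁ Γ₂)).Finite :=
    (hfin₁.image _).union (hfin₂.image _)
  refine ⟨d, ρ, hinj, hTfin.toFinset, ?_⟩
  rw [hTfin.coe_toFinset]
  exact ⟨hT, exists_quasiIsometry_constants (fun _ ↦ Nat.cast_nonneg _) hρ.exists_le_cartanNorm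
    (exists_cartanNorm_le hT hTfin ρ)⟩
end
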